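/- arXiv:2601.07817 — 2 statements merged into one kernel-verified Lean document; each statement's English description precedes it below -/
import Mathlib

section
/- For every fixed ε > 0 there is a constant C(ε) such that, with the notation of the context, for every admissible pair (q, κ) there exist a subset S₀(q, κ) ⊆ S(q, κ) and a finite collection 𝓛(q, κ) of rank-two sublattices 𝖬 ⊂ ℤ⁴ with #S₀(q, κ) ≤ C(ε)(Y₁Y₂)^{−1/3}Y₃^{−2}B^{2/3+ε} and #𝓛(q, κ) ≤ C(ε)(Y₁Y₂)^{−1/3}Y₃^{−2}B^{2/3+ε}, such that S(q, κ) \ S₀(q, κ) is contained in the union of the lattices 𝖬 ∈ 𝓛(q, κ); every point (x₁, x₂, y₁, y₂) of every 𝖬 ∈ 𝓛(q, κ) satisfies the congruences (c1), (c2), (c3), (c4); each 𝖬 ∈ 𝓛(q, κ) contains at least one point with a₁x₁²y₁³ + a₂x₂²y₂³ ≠ 0; and every nonzero point (x₁, x₂, y₁, y₂) of each 𝖬 has (x₁, x₂) ≠ (0, 0) and (y₁, y₂) ≠ (0, 0). -/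
/-- The set `S₀(B)` of sextuples `(x₁, x₂, x₃, y₁, y₂, y₃)` of positive integers (encoded as a
pair of functions `Fin 3 → ℤ`) such that `Xᵢ/2 < xᵢ ≤ Xᵢ` and `Yᵢ/2 < yᵢ ≤ Yᵢ`, the equation
`a₁x₁²y₁³ + a₂x₂²y₂³ + a₃x₃²y₃³ = 0` holds, `gcd(x₁y₁, x₂y₂, x₃y₃) = 1`,
`gcd(a₁a₂a₃, x₁x₂x₃y₁y₂y₃) = 1`, and `a₁y₁, a₂y₂, a₃y₃` are all squarefree. -/
def S0 (a : Fin 3 → ℤ) (X Y : Fin 3 → ℝ) : Set ((Fin 3 → ℤ) × (Fin 3 → ℤ)) :=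
  {p | (∀ i, 0 < p.1 i) ∧ (∀ i, 0 < p.2 i) ∧
    (∀ i, X i / 2 < (p.1 i : ℝ) ∧ (p.1 i : ℝ) ≤ X i) ∧
    (∀ i, Y i / 2 < (p.2 i : ℝ) ∧ (p.2 i : ℝ) ≤ Y i) ∧
    a 0 * p.1 0 ^ 2 * p.2 0 ^ 3 + a 1 * p.1 1 ^ 2 * p.2 1 ^ 3 +
      a 2 * p.1 2 ^ 2 * p.2 2 ^ 3 = 0 ∧
    Int.gcd (p.1 0 * p.2 0) (Int.gcd (p.1 1 * p.2 1) (p.1 2 * p.2 2)) = 1 ∧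
    Int.gcd (a 0 * a 1 * a 2) (p.1 0 * p.1 1 * p.1 2 * p.2 0 * p.2 1 * p.2 2) = 1 ∧
    (∀ i, Squarefree (a i * p.2 i))}

/-- The set `S(q, κ)` of quadruples `(x₁, x₂, y₁, y₂)` of positive integers satisfying
`x₁y₁ + κx₂y₂ ≡ 0 (mod q)` and such that `(x₁, x₂, x₃, y₁, y₂, q) ∈ S₀(B)` for some positive
integer `x₃`. -/
def SqK (a : Fin 3 → ℤ) (X Y : Fin 3 → ℝ) (q κ : ℤ) : Set (ℤ × ℤ × ℤ × ℤ) :=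
  {t | ∃ x₁ x₂ y₁ y₂ : ℤ, t = (x₁, x₂, y₁, y₂) ∧
    0 < x₁ ∧ 0 < x₂ ∧ 0 < y₁ ∧ 0 < y₂ ∧
    q ∣ x₁ * y₁ + κ * x₂ * y₂ ∧
    ∃ x₃ : ℤ, 0 < x₃ ∧ (![x₁, x₂, x₃], ![y₁, y₂, q]) ∈ S0 a X Y}

/-- The congruences (c1), (c2), (c3), (c4). -/
def Congs (a₁ a₂ q κ x₁ x₂ y₁ y₂ : ℤ) : Prop :=
  (q ∣ a₂ * x₁ - κ ^ 3 * a₁ * x₂) ∧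
  (q ∣ κ ^ 2 * a₁ * y₁ + a₂ * y₂) ∧
  (q ∣ κ ^ 2 * a₁ * x₂ * y₁ + a₂ * x₂ * y₂) ∧
  (q ^ 2 ∣ 2 * a₂ * x₁ * y₁ + κ ^ 3 * a₁ * x₂ * y₁ + 3 * κ * a₂ * x₂ * y₂) ∧
  (q ^ 3 ∣ 5 * κ ^ 2 * a₁ * a₂ * x₁ * y₁ + a₂ ^ 2 * x₁ * y₂ +
    κ ^ 5 * a₁ ^ 2 * x₂ * y₁ + 5 * κ ^ 3 * a₁ * a₂ * x₂ * y₂)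


/-! ### The divisor bound -/

lemma divisor_bound (η : ℝ) (hη : 0 < η) :
    ∃ C : ℝ, 1 ≤ C ∧ ∀ n : ℕ, n ≠ 0 → (n.divisors.card : ℝ) ≤ C * (n : ℝ) ^ η := by
  have hl2 : 0 < Real.log 2 := Real.log_pos (by norm_num)
  set K : ℝ := 1 + 1 / (η * Real.log 2) with hK
  have hK1 : 1 ≤ K := by
    have : 0 ≤ 1 / (η * Real.log 2) := by positivity
    linarith
  set P : ℕ := ⌈(2 : ℝ) ^ (1 / η)⌉₊ with hP
  refine ⟨K ^ P, one_le_pow₀ hK1, ?_⟩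
  intro n hn
  rw [Nat.card_divisors hn]
  have hprod : (n : ℝ) ^ η = ∏ p ∈ n.primeFactors, ((p : ℝ) ^ (n.factorization p)) ^ η := by
    rw [Real.finsetProd_rpow _ _ (fun p _ => by positivity)]
    congr 1
    conv_lhs => rw [← Nat.prod_factorization_pow_eq_self hn]
    rw [Finsupp.prod, Nat.support_factorization]
    push_cast
    rfl
  have hterm : ∀ p ∈ n.primeFactors, ((n.factorization p : ℝ) + 1) ≤
      (if p < P then K else 1) * ((p : ℝ) ^ (n.factorization p)) ^ η := by
    intro p hp
    have hpp : p.Prime := Nat.prime_of_mem_primeFactors hp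
    have hp2 : (2 : ℝ) ≤ p := by exact_mod_cast hpp.two_le
    set v := n.factorization p
    have hcomm : ((p : ℝ) ^ v) ^ η = ((p : ℝ) ^ η) ^ v := by
      rw [← Real.rpow_natCast, ← Real.rpow_mul (by linarith), mul_comm,
        Real.rpow_mul (by linarith), Real.rpow_natCast]
    rw [hcomm]
    split_ifs with h
    · have h1 : (2 : ℝ) ^ η ≤ (p : ℝ) ^ η := Real.rpow_le_rpow (by norm_num) hp2 hη.le
      have h2 : 1 + η * Real.log 2 ≤ (2 : ℝ) ^ η := by
        rw [Real.rpow_def_of_pos (by norm_num)]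
        have := Real.add_one_le_exp (Real.log 2 * η)
        linarith
      have h3 : 1 + (v : ℝ) * (η * Real.log 2) ≤ ((p : ℝ) ^ η) ^ v := by
        refine (one_add_mul_le_pow (by have := mul_pos hη hl2; linarith) v).trans ?_
        have := mul_pos hη hl2
        exact pow_le_pow_left₀ (by linarith) (by linarith) v
      have h4 : (v : ℝ) + 1 ≤ K * (1 + (v : ℝ) * (η * Real.log 2)) := by
        have h5 : 0 < η * Real.log 2 := mul_pos hη hl2
        have h6 : 1 / (η * Real.log 2) * ((v : ℝ) * (η * Real.log 2)) = v := by
          field_simp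
        have h7 : 0 ≤ 1 / (η * Real.log 2) := by positivity
        have h8 : 0 ≤ (v : ℝ) * (η * Real.log 2) := by positivity
        rw [hK]
        nlinarith
      exact h4.trans (mul_le_mul_of_nonneg_left h3 (by linarith))
    · have h1 : (2 : ℝ) ^ (1 / η) ≤ p := by
        have : P ≤ p := by omega
        exact (Nat.le_ceil _).trans (by exact_mod_cast this)
      have h2 : (2 : ℝ) ≤ (p : ℝ) ^ η := by
        have := Real.rpow_le_rpow (by positivity) h1 hη.le
        rwa [← Real.rpow_mul (by norm_num), one_div_mul_cancel hη.ne', Real.rpow_one] at this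
      have h3 : ((v : ℝ) + 1) ≤ 2 ^ v := by
        have : v + 1 ≤ 2 ^ v := Nat.lt_two_pow_self
        exact_mod_cast this
      rw [one_mul]
      exact h3.trans (pow_le_pow_left₀ (by norm_num) h2 v)
  push_cast
  refine (Finset.prod_le_prod (fun p _ => by positivity) hterm).trans ?_
  rw [Finset.prod_mul_distrib, ← hprod]
  refine mul_le_mul_of_nonneg_right ?_ (by positivity)
  rw [Finset.prod_ite, Finset.prod_const, Finset.prod_const_one, mul_one]
  refine pow_le_pow_right₀ hK1 ?_
  calc _ ≤ (Finset.range P).card := by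
        refine Finset.card_le_card ?_
        intro p hp
        simp at hp ⊢
        exact hp.2
    _ = P := Finset.card_range P

/-! ### Congruences -/

lemma congs_of_point (a₁ a₂ q κ x₁ x₂ y₁ y₂ : ℤ) (hq : q ≠ 0)
    (h1 : q ∣ x₁ * y₁ + κ * x₂ * y₂) (hF : q ^ 3 ∣ a₁ * x₁ ^ 2 * y₁ ^ 3 + a₂ * x₂ ^ 2 * y₂ ^ 3)
    (ha₁ : IsCoprime q a₁) (hκ : IsCoprime q κ)
    (hx₂ : IsCoprime q x₂) (hy₁ : IsCoprime q y₁) (hy₂ : IsCoprime q y₂) :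
    Congs a₁ a₂ q κ x₁ x₂ y₁ y₂ := by
  have hb : q ∣ κ ^ 2 * a₁ * y₁ + a₂ * y₂ := by
    have hcop : IsCoprime q (x₂ ^ 2 * y₂ ^ 2) := hx₂.pow_right.mul_right hy₂.pow_right
    refine hcop.dvd_of_dvd_mul_left ?_
    obtain ⟨m, hm⟩ := h1
    obtain ⟨n, hn⟩ := (Dvd.intro _ (by ring : q * q ^ 2 = q ^ 3)).trans hF
    refine ⟨n - m * a₁ * y₁ * (x₁ * y₁ - κ * x₂ * y₂), ?_⟩
    linear_combination hn - a₁ * y₁ * (x₁ * y₁ - κ * x₂ * y₂) * hm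
  have ha : q ∣ a₂ * x₁ - κ ^ 3 * a₁ * x₂ := by
    refine hy₁.dvd_of_dvd_mul_left ?_
    obtain ⟨m, hm⟩ := h1
    obtain ⟨n, hn⟩ := hb
    refine ⟨a₂ * m - κ * x₂ * n, ?_⟩
    linear_combination a₂ * hm - κ * x₂ * hn
  obtain ⟨s, hs⟩ := ha
  obtain ⟨t, ht⟩ := hb
  set E := 2 * s * y₁ + 3 * κ * t * x₂ with hE
  have hmain : q ^ 2 ∣ κ ^ 3 * a₁ * x₂ * y₁ * E + q * (y₁ ^ 2 * s ^ 2 - 3 * κ ^ 2 * x₂ ^ 2 * t ^ 2) := by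
    have hcop : IsCoprime (q ^ 2) (a₁ * y₁) := (ha₁.mul_right hy₁).pow_left
    refine hcop.dvd_of_dvd_mul_left ?_
    obtain ⟨n, hn⟩ := hF
    refine ⟨a₂ ^ 2 * n - x₂ ^ 2 * t ^ 3, ?_⟩
    apply mul_left_cancel₀ hq
    have e1 : a₂ * x₁ = κ ^ 3 * a₁ * x₂ + q * s := by linarith
    have e2 : a₂ * y₂ = - (κ ^ 2 * a₁ * y₁) + q * t := by linarith
    have e3 : a₁ * (a₂ * x₁) ^ 2 * y₁ ^ 3 + x₂ ^ 2 * (a₂ * y₂) ^ 3 = q ^ 3 * (a₂ ^ 2 * n) := by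
      linear_combination a₂ ^ 2 * hn
    rw [e1, e2] at e3
    rw [hE]
    linear_combination e3
  have hqE : q ∣ E := by
    have hcop : IsCoprime q (κ ^ 3 * a₁ * x₂ * y₁) :=
      ((hκ.pow_right.mul_right ha₁).mul_right hx₂).mul_right hy₁
    refine hcop.dvd_of_dvd_mul_left ?_
    obtain ⟨n, hn⟩ := hmain
    exact ⟨q * n - (y₁ ^ 2 * s ^ 2 - 3 * κ ^ 2 * x₂ ^ 2 * t ^ 2), by linear_combination hn⟩
  have h4 : q ^ 2 ∣ 2 * κ ^ 2 * a₁ * E + q * s * t := by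
    have hcop : IsCoprime (q ^ 2) (κ * x₂ * y₁) := ((hκ.mul_right hx₂).mul_right hy₁).pow_left
    refine hcop.dvd_of_dvd_mul_left ?_
    obtain ⟨n, hn⟩ := hmain
    obtain ⟨m, hm⟩ := hqE
    refine ⟨2 * n - m * (y₁ * s - 2 * κ * x₂ * t), ?_⟩
    have : E * (y₁ * s - 2 * κ * x₂ * t) = 2 * y₁ ^ 2 * s ^ 2 - κ * x₂ * y₁ * s * t
        - 6 * κ ^ 2 * x₂ ^ 2 * t ^ 2 := by rw [hE]; ring
    linear_combination 2 * hn + q * this - q * (y₁ * s - 2 * κ * x₂ * t) * hm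
  refine ⟨⟨s, hs⟩, ⟨t, ht⟩, ⟨x₂ * t, by linear_combination x₂ * ht⟩, ?_, ?_⟩
  · obtain ⟨m, hm⟩ := hqE
    refine ⟨m, ?_⟩
    linear_combination q * hm + 2 * y₁ * hs + 3 * κ * x₂ * ht - q * hE
  · obtain ⟨n, hn⟩ := h4
    refine ⟨n, ?_⟩
    linear_combination q * hn + (5 * κ ^ 2 * a₁ * y₁ + a₂ * y₂) * hs
      + (κ ^ 3 * a₁ * x₂ + 5 * κ ^ 3 * a₁ * x₂ + q * s) * ht - 2 * κ ^ 2 * a₁ * q * hE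

/-- The facts about a point of `S(q, κ)` used below. -/
structure Pt (a₁ a₂ q κ : ℤ) (X₁ X₂ Y₁ Y₂ : ℝ) (x₁ x₂ y₁ y₂ : ℤ) : Prop where
  px₁ : 0 < x₁
  px₂ : 0 < x₂
  py₁ : 0 < y₁
  py₂ : 0 < y₂
  bx₁ : (x₁ : ℝ) ≤ X₁
  bx₂ : (x₂ : ℝ) ≤ X₂
  by₁ : (y₁ : ℝ) ≤ Y₁
  by₂ : (y₂ : ℝ) ≤ Y₂
  cx : IsCoprime x₁ x₂
  cy : IsCoprime y₁ y₂
  qx₁ : IsCoprime q x₁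
  qx₂ : IsCoprime q x₂
  qy₁ : IsCoprime q y₁
  qy₂ : IsCoprime q y₂
  Fne : a₁ * x₁ ^ 2 * y₁ ^ 3 + a₂ * x₂ ^ 2 * y₂ ^ 3 ≠ 0
  Fdvd : q ^ 3 ∣ a₁ * x₁ ^ 2 * y₁ ^ 3 + a₂ * x₂ ^ 2 * y₂ ^ 3
  cong : Congs a₁ a₂ q κ x₁ x₂ y₁ y₂

lemma isCoprime_of_no_prime {m n : ℤ} (h : ∀ p : ℤ, Prime p → p ∣ m → p ∣ n → False)
    (hm : m ≠ 0) : IsCoprime m n := by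
  refine isCoprime_of_prime_dvd (fun h0 => hm h0.1) ?_
  intro z hz h1 h2
  exact h z hz h1 h2

lemma pt_of_mem (a : Fin 3 → ℤ) (X Y : Fin 3 → ℝ) (q κ : ℤ) (ha : ∀ i, a i ≠ 0) (hq : 0 < q)
    (hqa : IsCoprime q (a 0 * a 1)) (hκ : IsCoprime κ q) (p : ℤ × ℤ × ℤ × ℤ)
    (hp : p ∈ SqK a X Y q κ) :
    Pt (a 0) (a 1) q κ (X 0) (X 1) (Y 0) (Y 1) p.1 p.2.1 p.2.2.1 p.2.2.2 := by
  obtain ⟨x₁, x₂, y₁, y₂, rfl, hx₁, hx₂, hy₁, hy₂, hdvd, x₃, hx₃, hS⟩ := hp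
  obtain ⟨-, -, hbx, hby, heq, hg1, hg2, -⟩ := hS
  simp only [Matrix.cons_val_zero, Matrix.cons_val_one, Matrix.cons_val] at heq hg1 hg2
  have hbx0 := (hbx 0).2
  have hbx1 := (hbx 1).2
  have hby0 := (hby 0).2
  have hby1 := (hby 1).2
  simp only [Matrix.cons_val_zero, Matrix.cons_val_one] at hbx0 hbx1 hby0 hby1
  have hno : ∀ p : ℤ, Prime p → p ∣ x₁ * y₁ → p ∣ x₂ * y₂ → p ∣ x₃ * q → False := by
    intro p hp h1 h2 h3
    have h4 : p ∣ ((Int.gcd (x₁ * y₁) (Int.gcd (x₂ * y₂) (x₃ * q)) : ℕ) : ℤ) :=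
      Int.dvd_coe_gcd h1 (Int.dvd_coe_gcd h2 h3)
    rw [hg1] at h4
    exact hp.not_isUnit (isUnit_of_dvd_one (by simpa using h4))
  have hno2 : ∀ p : ℤ, Prime p → p ∣ a 2 → p ∣ x₁ * x₂ * x₃ * y₁ * y₂ * q → False := by
    intro p hp h1 h2
    have h4 := Int.dvd_coe_gcd (h1.mul_left (a 0 * a 1)) h2
    rw [hg2] at h4
    exact hp.not_isUnit (isUnit_of_dvd_one (by simpa using h4))
  have hqa0 : IsCoprime q (a 0) := hqa.of_mul_right_left
  have hqa1 : IsCoprime q (a 1) := hqa.of_mul_right_right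
  have c12 : IsCoprime (x₁ * y₁) (x₂ * y₂) := by
    refine isCoprime_of_no_prime ?_ (by positivity)
    intro p hp h1 h2
    have h3 : p ∣ a 2 * x₃ ^ 2 * q ^ 3 := by
      obtain ⟨m, hm⟩ := h1
      obtain ⟨n, hn⟩ := h2
      refine ⟨-(a 0 * m * x₁ * y₁ ^ 2 + a 1 * n * x₂ * y₂ ^ 2), ?_⟩
      linear_combination heq - a 0 * x₁ * y₁ ^ 2 * hm - a 1 * x₂ * y₂ ^ 2 * hn
    rcases hp.dvd_or_dvd h3 with h4 | h4
    · rcases hp.dvd_or_dvd h4 with h5 | h5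
      · refine hno2 p hp h5 ?_
        rw [show x₁ * x₂ * x₃ * y₁ * y₂ * q = (x₁ * y₁) * (x₂ * x₃ * y₂ * q) by ring]
        exact h1.mul_right _
      · exact hno p hp h1 h2 ((hp.dvd_of_dvd_pow h5).mul_right _)
    · exact hno p hp h1 h2 ((hp.dvd_of_dvd_pow h4).mul_left _)
  have c1q : IsCoprime (x₁ * y₁) q := by
    refine isCoprime_of_no_prime ?_ (by positivity)
    intro p hp h1 h2
    have h3 : p ∣ a 1 * x₂ ^ 2 * y₂ ^ 3 := by
      obtain ⟨m, hm⟩ := h1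
      obtain ⟨n, hn⟩ := h2
      refine ⟨-(a 0 * m * x₁ * y₁ ^ 2 + a 2 * x₃ ^ 2 * n * q ^ 2), ?_⟩
      linear_combination heq - a 0 * x₁ * y₁ ^ 2 * hm - a 2 * x₃ ^ 2 * q ^ 2 * hn
    have h6 : p ∣ x₂ * y₂ := by
      rcases hp.dvd_or_dvd h3 with h4 | h4
      · rcases hp.dvd_or_dvd h4 with h5 | h5
        · exact (hp.not_isUnit (hqa1.isUnit_of_dvd' h2 h5)).elim
        · exact (hp.dvd_of_dvd_pow h5).mul_right _
      · exact (hp.dvd_of_dvd_pow h4).mul_left _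
    exact hno p hp h1 h6 (h2.mul_left _)
  have c2q : IsCoprime (x₂ * y₂) q := by
    refine isCoprime_of_no_prime ?_ (by positivity)
    intro p hp h1 h2
    have h3 : p ∣ a 0 * x₁ ^ 2 * y₁ ^ 3 := by
      obtain ⟨m, hm⟩ := h1
      obtain ⟨n, hn⟩ := h2
      refine ⟨-(a 1 * m * x₂ * y₂ ^ 2 + a 2 * x₃ ^ 2 * n * q ^ 2), ?_⟩
      linear_combination heq - a 1 * x₂ * y₂ ^ 2 * hm - a 2 * x₃ ^ 2 * q ^ 2 * hn
    have h6 : p ∣ x₁ * y₁ := by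
      rcases hp.dvd_or_dvd h3 with h4 | h4
      · rcases hp.dvd_or_dvd h4 with h5 | h5
        · exact (hp.not_isUnit (hqa0.isUnit_of_dvd' h2 h5)).elim
        · exact (hp.dvd_of_dvd_pow h5).mul_right _
      · exact (hp.dvd_of_dvd_pow h4).mul_left _
    exact hno p hp h6 h1 (h2.mul_left _)
  have hFd : q ^ 3 ∣ a 0 * x₁ ^ 2 * y₁ ^ 3 + a 1 * x₂ ^ 2 * y₂ ^ 3 :=
    ⟨-(a 2 * x₃ ^ 2), by linear_combination heq⟩
  have hFn : a 0 * x₁ ^ 2 * y₁ ^ 3 + a 1 * x₂ ^ 2 * y₂ ^ 3 ≠ 0 := by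
    intro h0
    rw [h0, zero_add] at heq
    have := mul_ne_zero (mul_ne_zero (ha 2) (pow_ne_zero 2 hx₃.ne')) (pow_ne_zero 3 hq.ne')
    exact this heq
  exact ⟨hx₁, hx₂, hy₁, hy₂, hbx0, hbx1, hby0, hby1,
    c12.of_mul_left_left.of_mul_right_left, c12.of_mul_left_right.of_mul_right_right,
    c1q.of_mul_left_left.symm, c2q.of_mul_left_left.symm,
    c1q.of_mul_left_right.symm, c2q.of_mul_left_right.symm, hFn, hFd,
    congs_of_point _ _ _ _ _ _ _ _ hq.ne' hdvd hFd hqa0 hκ.symm c2q.of_mul_left_left.symm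
      c1q.of_mul_left_right.symm c2q.of_mul_left_right.symm⟩

lemma prim_unique {u₁ u₂ v₁ v₂ : ℤ} (hu₁ : 0 < u₁) (_hu₂ : 0 < u₂) (hv₁ : 0 < v₁) (_hv₂ : 0 < v₂)
    (hu : IsCoprime u₁ u₂) (hv : IsCoprime v₁ v₂) (h : u₁ * v₂ = u₂ * v₁) :
    u₁ = v₁ ∧ u₂ = v₂ := by
  have h1 : u₁ ∣ v₁ := hu.dvd_of_dvd_mul_left (Dvd.intro _ h)
  have h2 : v₁ ∣ u₁ := hv.dvd_of_dvd_mul_right (Dvd.intro_left _ h.symm)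
  have h3 : u₁ = v₁ := Int.dvd_antisymm hu₁.le hv₁.le h1 h2
  subst h3
  refine ⟨rfl, ?_⟩
  have : u₁ * (v₂ - u₂) = 0 := by linarith
  rcases mul_eq_zero.mp this with h | h <;> omega

section
variable {a₁ a₂ q κ : ℤ} {X₁ X₂ Y₁ Y₂ : ℝ}

lemma pt_same_x {x₁ x₂ y₁ y₂ z₁ z₂ : ℤ} (hq : 0 < q) (ha₂ : IsCoprime q a₂)
    (h : Pt a₁ a₂ q κ X₁ X₂ Y₁ Y₂ x₁ x₂ y₁ y₂) (h' : Pt a₁ a₂ q κ X₁ X₂ Y₁ Y₂ x₁ x₂ z₁ z₂)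
    (hY : 3 * (Y₁ * Y₂) < (q : ℝ) ^ 3) : y₁ = z₁ ∧ y₂ = z₂ := by
  refine prim_unique h.py₁ h.py₂ h'.py₁ h'.py₂ h.cy h'.cy ?_
  have hD : q ∣ y₁ * z₂ - y₂ * z₁ := by
    refine ha₂.dvd_of_dvd_mul_left ?_
    obtain ⟨m, hm⟩ := h.cong.2.1
    obtain ⟨n, hn⟩ := h'.cong.2.1
    exact ⟨y₁ * n - z₁ * m, by linear_combination y₁ * hn - z₁ * hm⟩
  obtain ⟨D, hD⟩ := hD
  have h3 : q ^ 3 ∣ (y₁ * z₂) ^ 3 - (y₂ * z₁) ^ 3 := by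
    have hcop : IsCoprime (q ^ 3) (a₂ * x₂ ^ 2 ) :=
      (ha₂.mul_right h.qx₂.pow_right).pow_left
    refine hcop.dvd_of_dvd_mul_left ?_
    obtain ⟨m, hm⟩ := h.Fdvd
    obtain ⟨n, hn⟩ := h'.Fdvd
    refine ⟨y₁ ^ 3 * n - z₁ ^ 3 * m, ?_⟩
    linear_combination y₁ ^ 3 * hn - z₁ ^ 3 * hm
  have h4 : q ^ 2 ∣ 3 * D := by
    have hcop : IsCoprime (q ^ 2) (y₁ * z₂ * (y₂ * z₁)) :=
      ((h.qy₁.mul_right h'.qy₂).mul_right (h.qy₂.mul_right h'.qy₁)).pow_left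
    refine hcop.dvd_of_dvd_mul_left ?_
    obtain ⟨m, hm⟩ := h3
    refine ⟨m - D ^ 3, ?_⟩
    apply mul_left_cancel₀ hq.ne'
    have e : y₁ * z₂ = y₂ * z₁ + q * D := by linarith
    rw [e] at hm ⊢
    linear_combination hm
  have h5 : q ^ 3 ∣ 3 * (y₁ * z₂ - y₂ * z₁) := by
    obtain ⟨m, hm⟩ := h4
    exact ⟨m, by linear_combination 3 * hD + q * hm⟩
  have h6 : 3 * (y₁ * z₂ - y₂ * z₁) = 0 := by
    refine Int.eq_zero_of_abs_lt_dvd h5 ?_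
    have b1 : (y₁ : ℝ) * z₂ ≤ Y₁ * Y₂ := by
      have := h.py₁; have := h'.py₂
      exact mul_le_mul h.by₁ h'.by₂ (by positivity) ((Int.cast_nonneg h.py₁.le).trans h.by₁)
    have b2 : (y₂ : ℝ) * z₁ ≤ Y₁ * Y₂ := by
      have := h.py₂; have := h'.py₁
      rw [mul_comm]
      exact mul_le_mul h'.by₁ h.by₂ (by positivity) ((Int.cast_nonneg h.py₁.le).trans h.by₁)
    have b3 : (0 : ℝ) < (y₁ : ℝ) * z₂ := by exact_mod_cast mul_pos h.py₁ h'.py₂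
    have b4 : (0 : ℝ) < (y₂ : ℝ) * z₁ := by exact_mod_cast mul_pos h.py₂ h'.py₁
    have : |(3 * ((y₁ : ℝ) * z₂ - y₂ * z₁))| < (q : ℝ) ^ 3 := by
      rw [abs_lt]; constructor <;> linarith
    exact_mod_cast this
  linarith

lemma pt_same_y {x₁ x₂ y₁ y₂ z₁ z₂ : ℤ} (hq : 0 < q) (ha₁ : IsCoprime q a₁) (ha₂ : IsCoprime q a₂)
    (h : Pt a₁ a₂ q κ X₁ X₂ Y₁ Y₂ x₁ x₂ y₁ y₂) (h' : Pt a₁ a₂ q κ X₁ X₂ Y₁ Y₂ z₁ z₂ y₁ y₂)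
    (hX : 4 * (X₁ * X₂) < (q : ℝ) ^ 3) : x₁ = z₁ ∧ x₂ = z₂ := by
  refine prim_unique h.px₁ h.px₂ h'.px₁ h'.px₂ h.cx h'.cx ?_
  have hD : q ∣ x₁ * z₂ - x₂ * z₁ := by
    refine ha₂.dvd_of_dvd_mul_left ?_
    obtain ⟨m, hm⟩ := h.cong.1
    obtain ⟨n, hn⟩ := h'.cong.1
    exact ⟨z₂ * m - x₂ * n, by linear_combination z₂ * hm - x₂ * hn⟩
  obtain ⟨D, hD⟩ := hD
  have h3 : q ^ 3 ∣ (x₁ * z₂) ^ 2 - (x₂ * z₁) ^ 2 := by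
    have hcop : IsCoprime (q ^ 3) (a₁ * y₁ ^ 3) :=
      (ha₁.mul_right h.qy₁.pow_right).pow_left
    refine hcop.dvd_of_dvd_mul_left ?_
    obtain ⟨m, hm⟩ := h.Fdvd
    obtain ⟨n, hn⟩ := h'.Fdvd
    refine ⟨z₂ ^ 2 * m - x₂ ^ 2 * n, ?_⟩
    linear_combination z₂ ^ 2 * hm - x₂ ^ 2 * hn
  have h4 : q ^ 2 ∣ D * (2 * (x₂ * z₁) + q * D) := by
    obtain ⟨m, hm⟩ := h3
    refine ⟨m, ?_⟩
    apply mul_left_cancel₀ hq.ne'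
    have e : x₁ * z₂ = x₂ * z₁ + q * D := by linarith
    rw [e] at hm
    linear_combination hm
  have h41 : q ∣ 2 * D := by
    have hcop : IsCoprime q (x₂ * z₁) := h.qx₂.mul_right h'.qx₁
    refine hcop.dvd_of_dvd_mul_left ?_
    obtain ⟨m, hm⟩ := h4
    exact ⟨q * m - D ^ 2, by linear_combination hm⟩
  have h42 : q ^ 2 ∣ 4 * D := by
    have hcop : IsCoprime (q ^ 2) (x₂ * z₁) := (h.qx₂.mul_right h'.qx₁).pow_left
    refine hcop.dvd_of_dvd_mul_left ?_
    obtain ⟨m, hm⟩ := h4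
    obtain ⟨n, hn⟩ := h41
    exact ⟨2 * m - D * n, by linear_combination 2 * hm - q * D * hn⟩
  have h5 : q ^ 3 ∣ 4 * (x₁ * z₂ - x₂ * z₁) := by
    obtain ⟨m, hm⟩ := h42
    exact ⟨m, by linear_combination 4 * hD + q * hm⟩
  have h6 : 4 * (x₁ * z₂ - x₂ * z₁) = 0 := by
    refine Int.eq_zero_of_abs_lt_dvd h5 ?_
    have b1 : (x₁ : ℝ) * z₂ ≤ X₁ * X₂ := by
      have := h.px₁; have := h'.px₂
      exact mul_le_mul h.bx₁ h'.bx₂ (by positivity) ((Int.cast_nonneg h.px₁.le).trans h.bx₁)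
    have b2 : (x₂ : ℝ) * z₁ ≤ X₁ * X₂ := by
      have := h.px₂; have := h'.px₁
      rw [mul_comm]
      exact mul_le_mul h'.bx₁ h.bx₂ (by positivity) ((Int.cast_nonneg h.px₁.le).trans h.bx₁)
    have b3 : (0 : ℝ) < (x₁ : ℝ) * z₂ := by exact_mod_cast mul_pos h.px₁ h'.px₂
    have b4 : (0 : ℝ) < (x₂ : ℝ) * z₁ := by exact_mod_cast mul_pos h.px₂ h'.px₁
    have : |(4 * ((x₁ : ℝ) * z₂ - x₂ * z₁))| < (q : ℝ) ^ 3 := by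
      rw [abs_lt]; constructor <;> linarith
    exact_mod_cast this
  linarith

end

/-! ### Covering by hyperplanes -/

/-- The points of the dual lattice in a box. -/
def GBox (D : AddSubgroup (Fin 4 → ℤ)) (R : ℤ) (W : Fin 4 → ℝ) (T : ℝ) : Set (Fin 4 → ℤ) :=
  {c | c ∈ D ∧ ∀ j, |(c j : ℝ)| * W j ≤ R * T}

section
variable {D : AddSubgroup (Fin 4 → ℤ)} {R : ℤ} {W : Fin 4 → ℝ}

lemma GBox_finite (hW : ∀ j, 0 < W j) (T : ℝ) : (GBox D R W T).Finite := by
  refine (Set.finite_Icc (fun j => -⌈R * T / W j⌉) (fun j => ⌈R * T / W j⌉)).subset ?_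
  intro c hc
  have h : ∀ j, |(c j : ℝ)| ≤ (⌈R * T / W j⌉ : ℝ) := by
    intro j
    refine le_trans ?_ (Int.le_ceil _)
    rw [le_div_iff₀ (hW j)]
    exact hc.2 j
  constructor
  · intro j
    have := (abs_le.mp (h j)).1
    exact_mod_cast this
  · intro j
    have := (abs_le.mp (h j)).2
    exact_mod_cast this

lemma GBox_mono (hR : 0 < R) {T T' : ℝ} (h : T ≤ T') : GBox D R W T ⊆ GBox D R W T' := by
  intro c hc
  refine ⟨hc.1, fun j => (hc.2 j).trans ?_⟩
  have : (0 : ℝ) < R := by exact_mod_cast hR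
  exact mul_le_mul_of_nonneg_left h this.le

lemma fiber_bound {ι : Type*} [DecidableEq ι] (hR : 0 < R) (hW : ∀ j, 0 < W j) {T : ℝ} (hT : 0 < T)
    (s : Finset ι) (φ : ι → Fin 4 → ℤ) (hD : ∀ i ∈ s, ∀ i' ∈ s, φ i - φ i' ∈ D)
    (hinj : ∀ i ∈ s, ∀ i' ∈ s, φ i = φ i' → i = i') (t : Finset (Fin 4 → ℤ))
    (ht : ∀ i ∈ s, (fun j => ⌊(φ i j : ℝ) * W j / (R * T)⌋) ∈ t) :
    s.card ≤ (GBox D R W T).ncard * t.card := by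
  have hR' : (0 : ℝ) < R := by exact_mod_cast hR
  refine Finset.card_le_mul_card_image_of_maps_to ht _ ?_
  intro b _
  rcases Finset.eq_empty_or_nonempty
    (s.filter (fun i => (fun j => ⌊(φ i j : ℝ) * W j / (R * T)⌋) = b)) with h | ⟨i0, hi0⟩
  · rw [h]; simp
  · rw [Finset.mem_filter] at hi0
    rw [← Set.ncard_coe_finset]
    refine Set.ncard_le_ncard_of_injOn (fun i => φ i - φ i0) ?_ ?_ (GBox_finite hW T)
    · intro i hi
      simp only [Finset.coe_filter, Set.mem_ofPred_eq] at hi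
      refine ⟨hD i hi.1 i0 hi0.1, fun j => ?_⟩
      have h1 : ⌊(φ i j : ℝ) * W j / (R * T)⌋ = ⌊(φ i0 j : ℝ) * W j / (R * T)⌋ := by
        rw [congrFun hi.2 j, congrFun hi0.2 j]
      have h2 := Int.abs_sub_lt_one_of_floor_eq_floor h1
      rw [← sub_div, ← sub_mul, abs_div, abs_mul, abs_of_pos (hW j),
        abs_of_pos (mul_pos hR' hT), div_lt_one (mul_pos hR' hT)] at h2
      simp only [Pi.sub_apply, Int.cast_sub]
      exact h2.le
    · intro i hi i' hi' h
      simp only [Finset.coe_filter, Set.mem_ofPred_eq] at hi hi'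
      exact hinj i hi.1 i' hi'.1 (by simpa using h)

lemma GBox_double (hR : 0 < R) (hW : ∀ j, 0 < W j) {T : ℝ} (hT : 0 < T) :
    (GBox D R W (2 * T)).ncard ≤ 625 * (GBox D R W T).ncard := by
  classical
  have hR' : (0 : ℝ) < R := by exact_mod_cast hR
  have hfin := GBox_finite (D := D) (R := R) hW (2 * T)
  have := fiber_bound (D := D) hR hW hT hfin.toFinset id ?_ ?_
    (Fintype.piFinset (fun _ => Finset.Icc (-2 : ℤ) 2)) ?_
  · rw [Set.ncard_eq_toFinset_card _ hfin]
    refine this.trans (le_of_eq ?_)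
    rw [Fintype.card_piFinset]
    simp
    ring
  · intro i hi i' hi'
    simp only [Set.Finite.mem_toFinset] at hi hi'
    exact D.sub_mem hi.1 hi'.1
  · intro i _ i' _ h
    exact h
  · intro i hi
    simp only [Set.Finite.mem_toFinset] at hi
    rw [Fintype.mem_piFinset]
    intro j
    have h1 : |(i j : ℝ) * W j / (R * T)| ≤ 2 := by
      rw [abs_div, abs_mul, abs_of_pos (hW j), abs_of_pos (mul_pos hR' hT),
        div_le_iff₀ (mul_pos hR' hT)]
      linarith [hi.2 j]
    rw [abs_le] at h1
    simp only [Finset.mem_Icc, id]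
    constructor
    · rw [Int.le_floor]; push_cast; exact h1.1
    · rw [← Int.lt_add_one_iff, Int.floor_lt]; push_cast; linarith [h1.2]

lemma dot_bound {T : ℝ} {c w : Fin 4 → ℤ}
    (hc : c ∈ GBox D R W T) (hw : ∀ j, |(w j : ℝ)| ≤ W j) :
    |((∑ j, c j * w j : ℤ) : ℝ)| ≤ 4 * (R * T) := by
  have h : ∀ j, |(c j : ℝ) * w j| ≤ R * T := by
    intro j
    rw [abs_mul]
    exact (mul_le_mul_of_nonneg_left (hw j) (abs_nonneg _)).trans (hc.2 j)
  push_cast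
  refine (Finset.abs_sum_le_sum_abs _ _).trans ?_
  refine (Finset.sum_le_sum (fun j _ => h j)).trans ?_
  simp

lemma GBox_pigeon (hR : 0 < R) (hW : ∀ j, 0 < W j) {T : ℝ} (hT : 0 < T)
    (Λ : Set (Fin 4 → ℤ)) (hΛ : ∀ c ∈ D, ∀ w ∈ Λ, R ∣ ∑ j, c j * w j)
    (hA : 8 * T + 1 < (GBox D R W T).ncard) (w : Fin 4 → ℤ) (hw : w ∈ Λ)
    (hwW : ∀ j, |(w j : ℝ)| ≤ W j) :
    ∃ c ∈ GBox D R W (2 * T), c ≠ 0 ∧ ∑ j, c j * w j = 0 := by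
  classical
  have hR' : (0 : ℝ) < R := by exact_mod_cast hR
  have hfin := GBox_finite (D := D) (R := R) hW T
  have hcard : (Finset.Icc (-⌊4 * T⌋) ⌊4 * T⌋).card < hfin.toFinset.card := by
    rw [Set.ncard_eq_toFinset_card _ hfin] at hA
    have h1 : (((Finset.Icc (-⌊4 * T⌋) ⌊4 * T⌋).card : ℤ) : ℝ) ≤ 8 * T + 1 := by
      rw [Int.card_Icc, Int.toNat_of_nonneg (by
        have : 0 ≤ ⌊4 * T⌋ := Int.floor_nonneg.mpr (by linarith)
        linarith)]
      have := Int.floor_le (4 * T)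
      push_cast
      linarith
    have h2 := h1.trans_lt hA
    exact_mod_cast h2
  obtain ⟨c, hc, c', hc', hne, heq⟩ := Finset.exists_ne_map_eq_of_card_lt_of_maps_to hcard
    (f := fun c => (∑ j, c j * w j) / R) (by
      intro c hc
      simp only [Finset.mem_coe, Set.Finite.mem_toFinset] at hc
      obtain ⟨k, hk⟩ := hΛ c hc.1 w hw
      have hb := dot_bound hc hwW
      rw [hk] at hb
      simp only [hk, Finset.coe_Icc, Set.mem_Icc]
      rw [Int.mul_ediv_cancel_left _ hR.ne']
      push_cast at hb
      rw [abs_mul, abs_of_pos hR'] at hb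
      have hb2 : |(k : ℝ)| ≤ 4 * T := by
        by_contra hcon
        push Not at hcon
        have := mul_lt_mul_of_pos_left hcon hR'
        linarith
      rw [abs_le] at hb2
      constructor
      · have : -k ≤ ⌊4 * T⌋ := by rw [Int.le_floor]; push_cast; linarith [hb2.1]
        linarith
      · rw [Int.le_floor]; exact hb2.2)
  simp only [Set.Finite.mem_toFinset] at hc hc'
  refine ⟨c - c', ⟨D.sub_mem hc.1 hc'.1, fun j => ?_⟩, sub_ne_zero.mpr hne, ?_⟩
  · simp only [Pi.sub_apply, Int.cast_sub]
    have h1 := hc.2 j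
    have h2 := hc'.2 j
    have h3 := mul_le_mul_of_nonneg_right (abs_sub (c j : ℝ) (c' j : ℝ)) (hW j).le
    linarith
  · obtain ⟨k, hk⟩ := hΛ c hc.1 w hw
    obtain ⟨k', hk'⟩ := hΛ c' hc'.1 w hw
    simp only [hk, hk'] at heq
    rw [Int.mul_ediv_cancel_left _ hR.ne', Int.mul_ediv_cancel_left _ hR.ne'] at heq
    simp only [Pi.sub_apply, sub_mul, Finset.sum_sub_distrib, hk, hk', heq, sub_self]

lemma GBox_cover (hR : 0 < R) (hW : ∀ j, 0 < W j)
    (Λ : Set (Fin 4 → ℤ)) (hΛ : ∀ c ∈ D, ∀ w ∈ Λ, R ∣ ∑ j, c j * w j) (k : ℕ) :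
    (∃ H : Finset (Fin 4 → ℤ), (H.card : ℝ) ≤ 390625 * 2 ^ k ∧
      (∀ c ∈ H, c ≠ 0 ∧ c ∈ GBox D R W (2 ^ k / 4)) ∧
      ∀ w ∈ Λ, (∀ j, |(w j : ℝ)| ≤ W j) → ∃ c ∈ H, ∑ j, c j * w j = 0) ∨
    ((GBox D R W (2 ^ k / 8)).ncard : ℝ) ≤ 2 ^ k + 1 := by
  classical
  have hR' : (0 : ℝ) < R := by exact_mod_cast hR
  induction k with
  | zero =>
    by_cases h : ∃ c ∈ GBox D R W (1 / 8), c ≠ 0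
    · left
      obtain ⟨c, hc, hc0⟩ := h
      refine ⟨{c}, by norm_num, ?_, ?_⟩
      · intro c' hc'
        rw [Finset.mem_singleton] at hc'
        subst hc'
        exact ⟨hc0, GBox_mono hR (by norm_num) hc⟩
      · intro w hw hwW
        refine ⟨c, Finset.mem_singleton_self _, ?_⟩
        refine Int.eq_zero_of_abs_lt_dvd (hΛ c hc.1 w hw) ?_
        have h1 := dot_bound hc hwW
        have h2 : |((∑ j, c j * w j : ℤ) : ℝ)| < R := by linarith
        exact_mod_cast h2
    · right
      push Not at h
      have : (GBox D R W (2 ^ 0 / 8)).ncard ≤ ({0} : Set (Fin 4 → ℤ)).ncard := by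
        refine Set.ncard_le_ncard ?_
        intro c hc
        exact h c (by simpa using hc)
      rw [Set.ncard_singleton] at this
      have h1 : ((GBox D R W (2 ^ 0 / 8)).ncard : ℝ) ≤ 1 := by exact_mod_cast this
      linarith [show (0 : ℝ) ≤ 2 ^ 0 by norm_num]
  | succ k ih =>
    have h2k : (1 : ℝ) ≤ 2 ^ k := one_le_pow₀ (by norm_num)
    rcases ih with ⟨H, h1, h2, h3⟩ | h
    · left
      refine ⟨H, ?_, ?_, h3⟩
      · rw [pow_succ]; linarith
      · intro c hc
        refine ⟨(h2 c hc).1, GBox_mono hR ?_ (h2 c hc).2⟩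
        rw [pow_succ]; linarith
    · by_cases hA : ((GBox D R W (2 ^ (k + 1) / 8)).ncard : ℝ) ≤ 2 ^ (k + 1) + 1
      · right; exact hA
      · left
        push Not at hA
        have hfin := GBox_finite (D := D) (R := R) hW (2 ^ (k + 1) / 4)
        refine ⟨hfin.toFinset.erase 0, ?_, ?_, ?_⟩
        · have e1 := GBox_double (D := D) hR hW (T := 2 ^ k / 8) (by positivity)
          have e2 := GBox_double (D := D) hR hW (T := 2 * (2 ^ k / 8)) (by positivity)
          have e3 : (2 : ℝ) * (2 * (2 ^ k / 8)) = 2 ^ (k + 1) / 4 := by rw [pow_succ]; ring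
          rw [e3] at e2
          have e4 : (hfin.toFinset.erase 0).card ≤ 625 * (625 * (GBox D R W (2 ^ k / 8)).ncard) := by
            refine (Finset.card_le_card (Finset.erase_subset _ _)).trans ?_
            rw [← Set.ncard_eq_toFinset_card _ hfin]
            omega
          have e5 : ((hfin.toFinset.erase 0).card : ℝ) ≤
              625 * (625 * (GBox D R W (2 ^ k / 8)).ncard) := by exact_mod_cast e4
          have e6 : (2 : ℝ) ^ (k + 1) = 2 ^ k * 2 := pow_succ _ _
          linarith
        · intro c hc
          rw [Finset.mem_erase, Set.Finite.mem_toFinset] at hc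
          exact hc
        · intro w hw hwW
          obtain ⟨c, hc, hc0, hcw⟩ := GBox_pigeon hR hW (T := 2 ^ (k + 1) / 8) (by positivity) Λ hΛ
            (by linarith) w hw hwW
          refine ⟨c, ?_, hcw⟩
          rw [Finset.mem_erase, Set.Finite.mem_toFinset]
          refine ⟨hc0, ?_⟩
          rwa [show (2 : ℝ) * (2 ^ (k + 1) / 8) = 2 ^ (k + 1) / 4 by ring] at hc

end

/-- The lattice cut out by the bilinear congruences (c2), (c3), (c4). -/
def LamSet (a₁ a₂ q κ : ℤ) : Set (Fin 4 → ℤ) :=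
  {w | q ∣ κ ^ 2 * a₁ * w 2 + a₂ * w 3 ∧
    q ^ 2 ∣ 2 * a₂ * w 0 + κ ^ 3 * a₁ * w 2 + 3 * κ * a₂ * w 3 ∧
    q ^ 3 ∣ 5 * κ ^ 2 * a₁ * a₂ * w 0 + a₂ ^ 2 * w 1 + κ ^ 5 * a₁ ^ 2 * w 2
      + 5 * κ ^ 3 * a₁ * a₂ * w 3}

/-- The dual of `LamSet`, scaled by `q ^ 3`. -/
def DualLam (a₁ a₂ q κ : ℤ) : AddSubgroup (Fin 4 → ℤ) where
  carrier := {c | ∀ w ∈ LamSet a₁ a₂ q κ, q ^ 3 ∣ ∑ j, c j * w j}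
  zero_mem' := by
    intro w _
    simp
  add_mem' := by
    intro c c' hc hc' w hw
    simp only [Pi.add_apply, add_mul, Finset.sum_add_distrib]
    exact dvd_add (hc w hw) (hc' w hw)
  neg_mem' := by
    intro c hc w hw
    simp only [Pi.neg_apply, neg_mul, Finset.sum_neg_distrib]
    exact (hc w hw).neg_right

lemma GBox_lower {a₁ a₂ q κ : ℤ} (hq : 0 < q) (ha₁ : IsCoprime q a₁) (ha₂ : IsCoprime q a₂)
    (hκ : IsCoprime q κ) {W : Fin 4 → ℝ} (hW : ∀ j, 0 < W j) {T : ℝ} (hT : 0 < T)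
    (hTW : ∀ j, T ≤ W j) :
    (q : ℝ) ^ 6 * T ^ 4 ≤
      32 * (∏ j, W j) * (GBox (DualLam a₁ a₂ q κ) (q ^ 3) W T).ncard := by
  classical
  have hq' : (0 : ℝ) < q := by exact_mod_cast hq
  have hR : 0 < q ^ 3 := by positivity
  set s : Finset (ℤ × ℤ × ℤ) :=
    Finset.Ico 0 q ×ˢ Finset.Ico 0 ((q ^ 2 + 1) / 2) ×ˢ Finset.Ico 0 (q ^ 3) with hs
  set ψ : ℤ × ℤ × ℤ → Fin 4 → ℤ := fun m =>
    ![m.2.1 * q * (2 * a₂) + m.2.2 * (5 * κ ^ 2 * a₁ * a₂),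
      m.2.2 * a₂ ^ 2,
      m.1 * q ^ 2 * (κ ^ 2 * a₁) + m.2.1 * q * (κ ^ 3 * a₁) + m.2.2 * (κ ^ 5 * a₁ ^ 2),
      m.1 * q ^ 2 * a₂ + m.2.1 * q * (3 * κ * a₂) + m.2.2 * (5 * κ ^ 3 * a₁ * a₂)] with hψ
  have hψD : ∀ m, ψ m ∈ DualLam a₁ a₂ q κ := by
    intro m w hw
    obtain ⟨⟨n1, h1⟩, ⟨n2, h2⟩, ⟨n3, h3⟩⟩ := hw
    rw [Fin.sum_univ_four]
    simp only [hψ, Matrix.cons_val_zero, Matrix.cons_val_one, Matrix.cons_val]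
    refine ⟨m.1 * n1 + m.2.1 * n2 + m.2.2 * n3, ?_⟩
    linear_combination m.1 * q ^ 2 * h1 + m.2.1 * q * h2 + m.2.2 * h3
  have hmulD : ∀ k : Fin 4 → ℤ, (fun j => q ^ 3 * k j) ∈ DualLam a₁ a₂ q κ := by
    intro k w _
    refine ⟨∑ j, k j * w j, ?_⟩
    rw [Finset.mul_sum]
    exact Finset.sum_congr rfl (fun j _ => by ring)
  have hφD : ∀ m, (fun j => ψ m j % q ^ 3) ∈ DualLam a₁ a₂ q κ := by
    intro m
    have : (fun j => ψ m j % q ^ 3) = ψ m - (fun j => q ^ 3 * (ψ m j / q ^ 3)) := by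
      funext j
      simp only [Pi.sub_apply]
      rw [Int.emod_def]
    rw [this]
    exact (DualLam a₁ a₂ q κ).sub_mem (hψD m) (hmulD _)
  have hmain := fiber_bound (D := DualLam a₁ a₂ q κ) hR hW hT s (fun m j => ψ m j % q ^ 3)
    (fun m _ m' _ => (DualLam a₁ a₂ q κ).sub_mem (hφD m) (hφD m')) ?_
    (Fintype.piFinset (fun j => Finset.Icc 0 ⌊W j / T⌋)) ?_
  · have hcs : (q : ℝ) ^ 6 ≤ 2 * s.card := by
      have e1 : (s.card : ℤ) = q * (((q ^ 2 + 1) / 2) * q ^ 3) := by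
        rw [hs, Finset.card_product, Finset.card_product, Int.card_Ico, Int.card_Ico, Int.card_Ico]
        push_cast
        rw [sub_zero, sub_zero, sub_zero, Int.toNat_of_nonneg hq.le, Int.toNat_of_nonneg hR.le,
          Int.toNat_of_nonneg (by positivity)]
      have e2 : q ^ 2 ≤ 2 * ((q ^ 2 + 1) / 2) := by omega
      have e3 : q ^ 6 ≤ 2 * (s.card : ℤ) := by
        rw [e1]
        have := mul_le_mul_of_nonneg_right e2 (show 0 ≤ q ^ 4 by positivity)
        linarith
      exact_mod_cast e3
    have hct : ((Fintype.piFinset (fun j => Finset.Icc 0 ⌊W j / T⌋)).card : ℝ) ≤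
        16 * (∏ j, W j) / T ^ 4 := by
      rw [Fintype.card_piFinset]
      push_cast
      have e1 : ∀ j ∈ Finset.univ, (((Finset.Icc 0 ⌊W j / T⌋).card : ℕ) : ℝ) ≤ 2 * W j / T := by
        intro j _
        have e2 : (1 : ℝ) ≤ W j / T := by rw [le_div_iff₀ hT]; linarith [hTW j]
        have e3 : 0 ≤ ⌊W j / T⌋ := Int.floor_nonneg.mpr (by linarith)
        have e4 : (((Finset.Icc 0 ⌊W j / T⌋).card : ℤ) : ℝ) = ⌊W j / T⌋ + 1 := by
          rw [Int.card_Icc, Int.toNat_of_nonneg (by linarith)]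
          push_cast; ring
        have e5 := Int.floor_le (W j / T)
        have e6 : (((Finset.Icc 0 ⌊W j / T⌋).card : ℕ) : ℝ) = ⌊W j / T⌋ + 1 := by
          exact_mod_cast e4
        rw [e6, mul_div_assoc]
        linarith
      refine (Finset.prod_le_prod (fun j _ => by positivity) e1).trans (le_of_eq ?_)
      rw [Fin.prod_univ_four, Fin.prod_univ_four]
      field_simp
      ring
    have hmain' : (s.card : ℝ) ≤ (GBox (DualLam a₁ a₂ q κ) (q ^ 3) W T).ncard *
      (Fintype.piFinset (fun j => Finset.Icc 0 ⌊W j / T⌋)).card := by exact_mod_cast hmain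
    have h7 := hmain'.trans (mul_le_mul_of_nonneg_left hct (by positivity))
    have h8 : (q : ℝ) ^ 6 ≤ 2 * ((GBox (DualLam a₁ a₂ q κ) (q ^ 3) W T).ncard *
      (16 * (∏ j, W j) / T ^ 4)) := by linarith
    have hT4 : 0 < T ^ 4 := by positivity
    have h9 := mul_le_mul_of_nonneg_right h8 hT4.le
    refine h9.trans (le_of_eq ?_)
    field_simp
    ring
  · intro m hm m' hm' heq
    have hj : ∀ j, q ^ 3 ∣ ψ m j - ψ m' j := by
      intro j
      have := congrFun heq j
      exact Int.ModEq.dvd (Int.ModEq.symm this)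
    obtain ⟨m1, m2, m3⟩ := m
    obtain ⟨n1, n2, n3⟩ := m'
    simp only [hs, Finset.mem_product, Finset.mem_Ico] at hm hm'
    obtain ⟨⟨hm1, hm1'⟩, ⟨hm2, hm2'⟩, hm3, hm3'⟩ := hm
    obtain ⟨⟨hn1, hn1'⟩, ⟨hn2, hn2'⟩, hn3, hn3'⟩ := hm'
    have h0 := hj 0
    have h1 := hj 1
    have h2 := hj 2
    simp only [hψ, Matrix.cons_val_zero, Matrix.cons_val_one, Matrix.cons_val] at h0 h1 h2
    have e3 : m3 - n3 = 0 := by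
      refine Int.eq_zero_of_abs_lt_dvd (m := q ^ 3) ?_ (by rw [abs_lt]; constructor <;> linarith)
      have hcop : IsCoprime (q ^ 3) (a₂ ^ 2) := ha₂.pow
      refine hcop.dvd_of_dvd_mul_right ?_
      rwa [sub_mul]
    have e3' : m3 = n3 := by linarith
    subst e3'
    have e2 : 2 * (m2 - n2) = 0 := by
      refine Int.eq_zero_of_abs_lt_dvd (m := q ^ 2) ?_ (by rw [abs_lt]; constructor <;> omega)
      have hcop : IsCoprime (q ^ 2) a₂ := ha₂.pow_left
      refine hcop.dvd_of_dvd_mul_right ?_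
      obtain ⟨n, hn⟩ := h0
      refine ⟨n, ?_⟩
      apply mul_left_cancel₀ hq.ne'
      linear_combination hn
    have e2' : m2 = n2 := by linarith
    subst e2'
    have e1 : m1 - n1 = 0 := by
      refine Int.eq_zero_of_abs_lt_dvd (m := q) ?_ (by rw [abs_lt]; constructor <;> linarith)
      have hcop : IsCoprime q (κ ^ 2 * a₁) := hκ.pow_right.mul_right ha₁
      refine hcop.dvd_of_dvd_mul_right ?_
      obtain ⟨n, hn⟩ := h2
      refine ⟨n, ?_⟩
      apply mul_left_cancel₀ (pow_ne_zero 2 hq.ne')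
      linear_combination hn
    have e1' : m1 = n1 := by linarith
    rw [e1']
  · intro m _
    rw [Fintype.mem_piFinset]
    intro j
    have e1 : 0 ≤ ψ m j % q ^ 3 := Int.emod_nonneg _ hR.ne'
    have e2 : ψ m j % q ^ 3 < q ^ 3 := Int.emod_lt_of_pos _ hR
    have e1' : (0 : ℝ) ≤ ((ψ m j % q ^ 3 : ℤ) : ℝ) := by exact_mod_cast e1
    have e2' : ((ψ m j % q ^ 3 : ℤ) : ℝ) ≤ ((q ^ 3 : ℤ) : ℝ) := by exact_mod_cast e2.le
    have hR' : (0 : ℝ) < ((q ^ 3 : ℤ) : ℝ) := by exact_mod_cast hR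
    have hWj := hW j
    rw [Finset.mem_Icc]
    constructor
    · exact Int.floor_nonneg.mpr (by positivity)
    · refine Int.floor_le_floor ?_
      rw [div_le_div_iff₀ (by positivity) hT]
      have := mul_le_mul_of_nonneg_right e2' (mul_pos hWj hT).le
      linarith

lemma hyperplane_cover {a₁ a₂ q κ : ℤ} (hq : 0 < q) (ha₁ : IsCoprime q a₁) (ha₂ : IsCoprime q a₂)
    (hκ : IsCoprime q κ) {W : Fin 4 → ℝ} {H : ℝ} (hH : 1 ≤ H) (hWH : ∀ j, 1200 * H ≤ W j)
    (hprod : ∏ j, W j ≤ 65536 * (q : ℝ) ^ 6 * H ^ 3) :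
    ∃ Hs : Finset (Fin 4 → ℤ), (Hs.card : ℝ) ≤ 1875000000 * H ∧
      (∀ c ∈ Hs, c ≠ 0 ∧ ∀ j, |c j| ≤ q ^ 3) ∧
      ∀ w ∈ LamSet a₁ a₂ q κ, (∀ j, |(w j : ℝ)| ≤ W j) → ∃ c ∈ Hs, ∑ j, c j * w j = 0 := by
  have hR : 0 < q ^ 3 := by positivity
  have hq' : (0 : ℝ) < q := by exact_mod_cast hq
  have hW : ∀ j, 0 < W j := fun j => by linarith [hWH j]
  obtain ⟨n, hn1, hn2⟩ := exists_nat_pow_near (x := 2400 * H) (y := (2 : ℝ)) (by linarith)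
    (by norm_num)
  have hk : (2 : ℝ) ^ (n + 1) ≤ 4800 * H := by rw [pow_succ]; linarith
  rcases GBox_cover (D := DualLam a₁ a₂ q κ) hR hW (LamSet a₁ a₂ q κ)
    (fun c hc w hw => hc w hw) (n + 1) with ⟨Hs, h1, h2, h3⟩ | h
  · refine ⟨Hs, by linarith, ?_, h3⟩
    intro c hc
    refine ⟨(h2 c hc).1, fun j => ?_⟩
    have h4 := (h2 c hc).2.2 j
    have hR' : (0 : ℝ) < ((q ^ 3 : ℤ) : ℝ) := by exact_mod_cast hR
    have h5 : (2 : ℝ) ^ (n + 1) / 4 ≤ W j := by linarith [hWH j]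
    have h6 : |(c j : ℝ)| ≤ ((q ^ 3 : ℤ) : ℝ) := by
      by_contra hcon
      push Not at hcon
      have := mul_lt_mul_of_pos_right hcon (hW j)
      have := mul_le_mul_of_nonneg_left h5 hR'.le
      linarith
    exact_mod_cast h6
  · exfalso
    set T : ℝ := 2 ^ (n + 1) / 8 with hT
    have hT0 : 300 * H ≤ T := by rw [hT]; linarith
    have hTpos : 0 < T := by linarith
    have h4 := GBox_lower hq ha₁ ha₂ hκ hW hTpos (fun j => by have := hWH j; linarith)
    set A : ℝ := ((GBox (DualLam a₁ a₂ q κ) (q ^ 3) W T).ncard : ℝ) with hA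
    have hA9 : A ≤ 9 * T := by linarith
    have hA0 : 0 ≤ A := by positivity
    have hP0 : 0 ≤ ∏ j, W j := Finset.prod_nonneg (fun j _ => (hW j).le)
    have h5 : (q : ℝ) ^ 6 * T ^ 4 ≤ 32 * (65536 * (q : ℝ) ^ 6 * H ^ 3) * (9 * T) := by
      refine h4.trans ?_
      gcongr
    have h6 : (300 * H) ^ 3 ≤ T ^ 3 := pow_le_pow_left₀ (by linarith) hT0 3
    have h7 : 0 < (q : ℝ) ^ 6 * T := by positivity
    have h8 : ((q : ℝ) ^ 6 * T) * (T ^ 3 - 18874368 * H ^ 3) ≤ 0 := by linarith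
    have h9 : 0 < T ^ 3 - 18874368 * H ^ 3 := by
      have : 0 < H ^ 3 := by positivity
      have e : (300 * H) ^ 3 = 27000000 * H ^ 3 := by ring
      linarith
    have := mul_pos h7 h9
    linarith

/-! ### Points on a line -/

/-- The properties required of the lattices in the collection. -/
def GoodLat (a₁ a₂ q κ : ℤ) (M : Submodule ℤ (ℤ × ℤ × ℤ × ℤ)) : Prop :=
  Module.finrank ℤ M = 2 ∧
    (∀ p : ℤ × ℤ × ℤ × ℤ, p ∈ M → Congs a₁ a₂ q κ p.1 p.2.1 p.2.2.1 p.2.2.2) ∧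
    (∃ p : ℤ × ℤ × ℤ × ℤ, p ∈ M ∧
      a₁ * p.1 ^ 2 * p.2.2.1 ^ 3 + a₂ * p.2.1 ^ 2 * p.2.2.2 ^ 3 ≠ 0) ∧
    (∀ p : ℤ × ℤ × ℤ × ℤ, p ∈ M → p ≠ 0 →
      (p.1, p.2.1) ≠ (0, 0) ∧ (p.2.2.1, p.2.2.2) ≠ (0, 0))

lemma exists_basis (N : Submodule ℤ (ℤ × ℤ × ℤ × ℤ)) (hN : ∀ P ∈ N, P.2.2 = 0 → P = 0)
    (z : ℤ × ℤ × ℤ × ℤ) (hz : z ∈ N) (hc : IsCoprime z.2.2.1 z.2.2.2) :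
    ∃ e : ℤ × ℤ × ℤ × ℤ, ∀ P ∈ N, ∃ u v : ℤ, P = u • z + v • e := by
  let Dm : (ℤ × ℤ × ℤ × ℤ) →ₗ[ℤ] ℤ :=
    { toFun := fun P => z.2.2.1 * P.2.2.2 - z.2.2.2 * P.2.2.1
      map_add' := by intro P Q; simp; ring
      map_smul' := by intro r P; simp; ring }
  obtain ⟨m, hm⟩ := (IsPrincipalIdealRing.principal (N.map Dm)).principal
  have hmem : m ∈ N.map Dm := by rw [hm]; exact Submodule.mem_span_singleton_self m
  obtain ⟨e, heN, hem⟩ := hmem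
  refine ⟨e, fun P hP => ?_⟩
  have hDP : Dm P ∈ N.map Dm := ⟨P, hP, rfl⟩
  rw [hm, Submodule.mem_span_singleton] at hDP
  obtain ⟨v, hv⟩ := hDP
  obtain ⟨g, h, hgh⟩ := hc
  set Q := P - v • e with hQ
  have hQN : Q ∈ N := N.sub_mem hP (N.smul_mem v heN)
  have hDQ : Dm Q = 0 := by
    rw [hQ, map_sub, map_smul, hem, hv, sub_self]
  have hDQ' : z.2.2.1 * Q.2.2.2 - z.2.2.2 * Q.2.2.1 = 0 := hDQ
  set u := g * Q.2.2.1 + h * Q.2.2.2 with hu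
  have h0 : Q - u • z = 0 := by
    refine hN _ (N.sub_mem hQN (N.smul_mem u hz)) ?_
    refine Prod.ext ?_ ?_
    · simp only [Prod.snd_sub, Prod.fst_sub, Prod.smul_snd, Prod.smul_fst, smul_eq_mul,
        Prod.fst_zero]
      rw [hu]
      linear_combination -Q.2.2.1 * hgh - h * hDQ'
    · simp only [Prod.snd_sub, Prod.smul_snd, smul_eq_mul,
        Prod.snd_zero]
      rw [hu]
      linear_combination -Q.2.2.2 * hgh + g * hDQ'
  refine ⟨u, v, ?_⟩
  have h1 : Q = u • z := sub_eq_zero.mp h0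
  rw [← h1, hQ]
  abel

/-- A bilinear form in `(x₁, x₂)` and `(y₁, y₂)`. -/
def bil (f : Fin 4 → ℤ) (P : ℤ × ℤ × ℤ × ℤ) : ℤ :=
  f 0 * (P.1 * P.2.2.1) + f 1 * (P.1 * P.2.2.2) + f 2 * (P.2.1 * P.2.2.1) +
    f 3 * (P.2.1 * P.2.2.2)

lemma bil_expand (f : Fin 4 → ℤ) (R : ℤ) (z e : ℤ × ℤ × ℤ × ℤ) (hz : R ∣ bil f z) :
    ∃ b c : ℤ, ∀ u v : ℤ, R ∣ bil f (u • z + v • e) - v * (b * u + c * v) := by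
  refine ⟨f 0 * (z.1 * e.2.2.1 + e.1 * z.2.2.1) + f 1 * (z.1 * e.2.2.2 + e.1 * z.2.2.2)
    + f 2 * (z.2.1 * e.2.2.1 + e.2.1 * z.2.2.1) + f 3 * (z.2.1 * e.2.2.2 + e.2.1 * z.2.2.2),
    bil f e, fun u v => ?_⟩
  obtain ⟨n, hn⟩ := hz
  refine ⟨u ^ 2 * n, ?_⟩
  have : R * (u ^ 2 * n) = u ^ 2 * bil f z := by rw [hn]; ring
  rw [this]
  simp only [bil, Prod.fst_add, Prod.snd_add, Prod.smul_fst, Prod.smul_snd, smul_eq_mul]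
  ring

lemma gcd_mul_dvd {R v n : ℤ} (h : R ∣ v * n) : R ∣ (Int.gcd v R : ℤ) * n := by
  have h1 : R ∣ ((Int.gcd (v * n) (R * n) : ℕ) : ℤ) := Int.dvd_coe_gcd h (Dvd.intro _ rfl)
  rw [Int.gcd_mul_right] at h1
  push_cast at h1
  rcases abs_choice n with h2 | h2 <;> rw [h2] at h1
  · exact h1
  · simpa using h1

/-- The form appearing in (c3). -/
def f3 (a₁ a₂ κ : ℤ) : Fin 4 → ℤ := ![2 * a₂, 0, κ ^ 3 * a₁, 3 * κ * a₂]

/-- The form appearing in (c4). -/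
def f4 (a₁ a₂ κ : ℤ) : Fin 4 → ℤ :=
  ![5 * κ ^ 2 * a₁ * a₂, a₂ ^ 2, κ ^ 5 * a₁ ^ 2, 5 * κ ^ 3 * a₁ * a₂]

lemma congs_iff (a₁ a₂ q κ : ℤ) (P : ℤ × ℤ × ℤ × ℤ) :
    Congs a₁ a₂ q κ P.1 P.2.1 P.2.2.1 P.2.2.2 ↔
      (q ∣ a₂ * P.1 - κ ^ 3 * a₁ * P.2.1) ∧ (q ∣ κ ^ 2 * a₁ * P.2.2.1 + a₂ * P.2.2.2) ∧
      q ^ 2 ∣ bil (f3 a₁ a₂ κ) P ∧ q ^ 3 ∣ bil (f4 a₁ a₂ κ) P := by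
  have e3 : bil (f3 a₁ a₂ κ) P = 2 * a₂ * P.1 * P.2.2.1 + κ ^ 3 * a₁ * P.2.1 * P.2.2.1
      + 3 * κ * a₂ * P.2.1 * P.2.2.2 := by
    simp only [bil, f3, Matrix.cons_val_zero, Matrix.cons_val_one, Matrix.cons_val]; ring
  have e4 : bil (f4 a₁ a₂ κ) P = 5 * κ ^ 2 * a₁ * a₂ * P.1 * P.2.2.1 + a₂ ^ 2 * P.1 * P.2.2.2 +
    κ ^ 5 * a₁ ^ 2 * P.2.1 * P.2.2.1 + 5 * κ ^ 3 * a₁ * a₂ * P.2.1 * P.2.2.2 := by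
    simp only [bil, f4, Matrix.cons_val_zero, Matrix.cons_val_one, Matrix.cons_val]; ring
  rw [e3, e4]
  constructor
  · rintro ⟨h1, h2, -, h3, h4⟩
    exact ⟨h1, h2, h3, h4⟩
  · rintro ⟨h1, h2, h3, h4⟩
    refine ⟨h1, h2, ?_, h3, h4⟩
    obtain ⟨n, hn⟩ := h2
    exact ⟨P.2.1 * n, by linear_combination P.2.1 * hn⟩

/-- The rank two lattice on which `d x` equals a given linear function of `y`. -/
def lineLat (c : Fin 4 → ℤ) (d : ℤ) : Submodule ℤ (ℤ × ℤ × ℤ × ℤ) where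
  carrier := {P | d * P.2.1 = c 0 * P.2.2.1 + c 1 * P.2.2.2 ∧
    d * P.1 = -(c 2 * P.2.2.1 + c 3 * P.2.2.2)}
  zero_mem' := by simp
  add_mem' := by
    rintro P Q ⟨h1, h2⟩ ⟨h3, h4⟩
    constructor
    · simp only [Prod.fst_add, Prod.snd_add]; linear_combination h1 + h3
    · simp only [Prod.fst_add, Prod.snd_add]; linear_combination h2 + h4
  smul_mem' := by
    rintro r P ⟨h1, h2⟩
    constructor
    · simp only [Prod.smul_fst, Prod.smul_snd, smul_eq_mul]; linear_combination r * h1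
    · simp only [Prod.smul_fst, Prod.smul_snd, smul_eq_mul]; linear_combination r * h2

lemma lineLat_y {c : Fin 4 → ℤ} {d : ℤ} (hd : d ≠ 0) {P : ℤ × ℤ × ℤ × ℤ} (hP : P ∈ lineLat c d)
    (h0 : P.2.2 = 0) : P = 0 := by
  obtain ⟨h1, h2⟩ := hP
  rw [h0] at h1 h2
  simp only [Prod.fst_zero, Prod.snd_zero, mul_zero, add_zero, neg_zero, mul_eq_zero, hd,
    false_or] at h1 h2
  exact Prod.ext h2 (Prod.ext h1 h0)

lemma lineLat_x {c : Fin 4 → ℤ} {d : ℤ} (hd : d ≠ 0) (hΔ : c 0 * c 3 - c 1 * c 2 ≠ 0)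
    {P : ℤ × ℤ × ℤ × ℤ} (hP : P ∈ lineLat c d)
    (h0 : P.1 = 0) (h0' : P.2.1 = 0) : P = 0 := by
  refine lineLat_y hd hP ?_
  obtain ⟨h1, h2⟩ := hP
  rw [h0'] at h1
  rw [h0] at h2
  refine Prod.ext ?_ ?_
  · have : (c 0 * c 3 - c 1 * c 2) * P.2.2.1 = 0 := by linear_combination -c 3 * h1 - c 1 * h2
    exact (mul_eq_zero.mp this).resolve_left hΔ
  · have : (c 0 * c 3 - c 1 * c 2) * P.2.2.2 = 0 := by linear_combination c 2 * h1 + c 0 * h2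
    exact (mul_eq_zero.mp this).resolve_left hΔ

section
variable {a₁ a₂ q κ : ℤ} {X₁ X₂ Y₁ Y₂ : ℝ}

lemma line_classes (hq : 0 < q) (S : Set (ℤ × ℤ × ℤ × ℤ))
    (hS : ∀ P ∈ S, Pt a₁ a₂ q κ X₁ X₂ Y₁ Y₂ P.1 P.2.1 P.2.2.1 P.2.2.2)
    (c : Fin 4 → ℤ) (d : ℤ) (hd : d ≠ 0) (hΔ : c 0 * c 3 - c 1 * c 2 ≠ 0) :
    ∃ 𝒞 : Finset (Set (ℤ × ℤ × ℤ × ℤ)), 𝒞.card ≤ (q ^ 3).natAbs.divisors.card ∧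
      (∀ C ∈ 𝒞, C ⊆ S ∧ (C.Subsingleton ∨ GoodLat a₁ a₂ q κ (Submodule.span ℤ C))) ∧
      ∀ P ∈ S, P ∈ lineLat c d → ∃ C ∈ 𝒞, P ∈ C := by
  classical
  by_cases hne : ∃ z ∈ S, z ∈ lineLat c d
  swap
  · push Not at hne
    exact ⟨∅, by simp, by simp, fun P hP hP' => (hne P hP hP').elim⟩
  obtain ⟨z, hzS, hzN⟩ := hne
  obtain ⟨e, he⟩ := exists_basis (lineLat c d) (fun P hP h => lineLat_y hd hP h) z hzN (hS z hzS).cy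
  have hzc := (congs_iff _ _ _ _ _).mp (hS z hzS).cong
  obtain ⟨b3, c3, h3⟩ := bil_expand (f3 a₁ a₂ κ) (q ^ 2) z e hzc.2.2.1
  obtain ⟨b4, c4, h4⟩ := bil_expand (f4 a₁ a₂ κ) (q ^ 3) z e hzc.2.2.2
  let cls : ℕ → Set (ℤ × ℤ × ℤ × ℤ) := fun g =>
    {P | P ∈ S ∧ P ∈ lineLat c d ∧ ∃ u v : ℤ, P = u • z + v • e ∧ Int.gcd v (q ^ 3) = g}
  refine ⟨(q ^ 3).natAbs.divisors.image cls, Finset.card_image_le, ?_, ?_⟩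
  swap
  · intro P hP hPN
    obtain ⟨u, v, huv⟩ := he P hPN
    refine ⟨cls (Int.gcd v (q ^ 3)), Finset.mem_image_of_mem _ ?_, hP, hPN, u, v, huv, rfl⟩
    rw [Nat.mem_divisors]
    exact ⟨Int.gcd_dvd_natAbs_right _ _, by simpa using hq.ne'⟩
  · intro C hC
    rw [Finset.mem_image] at hC
    obtain ⟨g, -, rfl⟩ := hC
    refine ⟨fun P hP => hP.1, ?_⟩
    by_cases hsub : (cls g).Subsingleton
    · exact Or.inl hsub
    right
    rw [Set.not_subsingleton_iff] at hsub
    obtain ⟨P, hP, P', hP', hPP'⟩ := hsub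
    set M := Submodule.span ℤ (cls g) with hM
    have hMN : M ≤ lineLat c d := Submodule.span_le.mpr (fun P hP => hP.2.1)
    have hPM : P ∈ M := Submodule.subset_span hP
    have hPM' : P' ∈ M := Submodule.subset_span hP'
    refine ⟨le_antisymm ?_ ?_, ?_, ⟨P, hPM, (hS P hP.1).Fne⟩, ?_⟩
    · let π : M →ₗ[ℤ] ℤ × ℤ :=
        ((LinearMap.snd ℤ ℤ (ℤ × ℤ)).comp (LinearMap.snd ℤ ℤ (ℤ × ℤ × ℤ))).comp M.subtype
      have hπ : Function.Injective π := by
        rw [injective_iff_map_eq_zero]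
        intro x hx
        exact Subtype.ext (lineLat_y hd (hMN x.2) hx)
      have := LinearMap.finrank_le_finrank_of_injective hπ
      simpa using this
    · have hdet : P.2.2.1 * P'.2.2.2 ≠ P.2.2.2 * P'.2.2.1 := by
        intro h
        have hp := hS P hP.1
        have hp' := hS P' hP'.1
        have hy := prim_unique hp.py₁ hp.py₂ hp'.py₁ hp'.py₂ hp.cy hp'.cy h
        apply hPP'
        have h0 : P - P' = 0 := by
          refine lineLat_y hd ((lineLat c d).sub_mem hP.2.1 hP'.2.1) ?_
          refine Prod.ext ?_ ?_
          · simp [hy.1]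
          · simp [hy.2]
        exact sub_eq_zero.mp h0
      have hli : LinearIndependent ℤ ![(⟨P, hPM⟩ : M), ⟨P', hPM'⟩] := by
        rw [LinearIndependent.pair_iff]
        intro s t hst
        have hst' : s • P + t • P' = 0 := congrArg Subtype.val hst
        have e1 : s * P.2.2.1 + t * P'.2.2.1 = 0 := by
          have := congrArg (fun Q : ℤ × ℤ × ℤ × ℤ => Q.2.2.1) hst'
          simpa using this
        have e2 : s * P.2.2.2 + t * P'.2.2.2 = 0 := by
          have := congrArg (fun Q : ℤ × ℤ × ℤ × ℤ => Q.2.2.2) hst'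
          simpa using this
        have hdet' : P.2.2.1 * P'.2.2.2 - P.2.2.2 * P'.2.2.1 ≠ 0 := sub_ne_zero.mpr hdet
        constructor
        · have : s * (P.2.2.1 * P'.2.2.2 - P.2.2.2 * P'.2.2.1) = 0 := by
            linear_combination P'.2.2.2 * e1 - P'.2.2.1 * e2
          exact (mul_eq_zero.mp this).resolve_right hdet'
        · have : t * (P.2.2.1 * P'.2.2.2 - P.2.2.2 * P'.2.2.1) = 0 := by
            linear_combination P.2.2.1 * e2 - P.2.2.2 * e1
          exact (mul_eq_zero.mp this).resolve_right hdet'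
      have := hli.fintype_card_le_finrank
      simpa using this
    · intro Q hQ
      rw [congs_iff]
      set g2 : ℕ := Int.gcd g (q ^ 2) with hg2
      have key : (q ∣ a₂ * Q.1 - κ ^ 3 * a₁ * Q.2.1) ∧ (q ∣ κ ^ 2 * a₁ * Q.2.2.1 + a₂ * Q.2.2.2) ∧
          ∃ u v : ℤ, Q = u • z + v • e ∧ (g : ℤ) ∣ v ∧ q ^ 3 ∣ g * (b4 * u + c4 * v) ∧
            (g2 : ℤ) ∣ v ∧ q ^ 2 ∣ g2 * (b3 * u + c3 * v) := by
        induction hQ using Submodule.span_induction with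
        | mem Q hQ =>
          obtain ⟨hQS, hQN, u, v, huv, hg⟩ := hQ
          have hQc := (congs_iff _ _ _ _ _).mp (hS Q hQS).cong
          have hg2' : g2 = Int.gcd v (q ^ 2) := by
            rw [hg2, ← hg]
            apply Nat.dvd_antisymm
            · refine Int.dvd_gcd ?_ ?_
              · exact (Int.gcd_dvd_left _ _).trans (Int.gcd_dvd_left _ _)
              · exact Int.gcd_dvd_right _ _
            · refine Int.dvd_gcd (Int.dvd_coe_gcd (Int.gcd_dvd_left _ _) ?_) (Int.gcd_dvd_right _ _)
              exact (Int.gcd_dvd_right _ _).trans (pow_dvd_pow _ (by norm_num))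
          refine ⟨hQc.1, hQc.2.1, u, v, huv, ?_, ?_, ?_, ?_⟩
          · rw [← hg]; exact Int.gcd_dvd_left _ _
          · rw [← hg]
            refine gcd_mul_dvd ?_
            have h5 := h4 u v
            rw [← huv] at h5
            exact (dvd_sub_right hQc.2.2.2).mp h5
          · rw [hg2']; exact Int.gcd_dvd_left _ _
          · rw [hg2']
            refine gcd_mul_dvd ?_
            have h5 := h3 u v
            rw [← huv] at h5
            exact (dvd_sub_right hQc.2.2.1).mp h5
        | zero =>
          refine ⟨by simp, by simp, 0, 0, by simp, by simp, by simp, by simp, by simp⟩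
        | add Q Q' _ _ h h' =>
          obtain ⟨⟨n1, k1⟩, ⟨n2, k2⟩, u, v, huv, k3, ⟨n4, k4⟩, k5, ⟨n6, k6⟩⟩ := h
          obtain ⟨⟨m1, l1⟩, ⟨m2, l2⟩, u', v', huv', l3, ⟨m4, l4⟩, l5, ⟨m6, l6⟩⟩ := h'
          refine ⟨⟨n1 + m1, ?_⟩, ⟨n2 + m2, ?_⟩, u + u', v + v', ?_, dvd_add k3 l3,
            ⟨n4 + m4, ?_⟩, dvd_add k5 l5, ⟨n6 + m6, ?_⟩⟩
          · simp only [Prod.fst_add, Prod.snd_add]; linear_combination k1 + l1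
          · simp only [Prod.fst_add, Prod.snd_add]; linear_combination k2 + l2
          · rw [huv, huv', add_smul, add_smul]; abel
          · linear_combination k4 + l4
          · linear_combination k6 + l6
        | smul r Q _ h =>
          obtain ⟨⟨n1, k1⟩, ⟨n2, k2⟩, u, v, huv, k3, ⟨n4, k4⟩, k5, ⟨n6, k6⟩⟩ := h
          refine ⟨⟨r * n1, ?_⟩, ⟨r * n2, ?_⟩, r * u, r * v, ?_, k3.mul_left _,
            ⟨r * n4, ?_⟩, k5.mul_left _, ⟨r * n6, ?_⟩⟩
          · simp only [Prod.smul_fst, Prod.smul_snd, smul_eq_mul]; linear_combination r * k1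
          · simp only [Prod.smul_fst, Prod.smul_snd, smul_eq_mul]; linear_combination r * k2
          · rw [huv, smul_add, smul_smul, smul_smul]
          · linear_combination r * k4
          · linear_combination r * k6
      obtain ⟨k1, k2, u, v, huv, ⟨v4, k3⟩, k4, ⟨v3, k5⟩, k6⟩ := key
      refine ⟨k1, k2, ?_, ?_⟩
      · have h5 := h3 u v
        rw [← huv] at h5
        refine (dvd_sub_left ?_).mp h5
        have : v * (b3 * u + c3 * v) = v3 * (g2 * (b3 * u + c3 * v)) := by
          conv_lhs => rw [show v * (b3 * u + c3 * v) = (b3 * u + c3 * v) * v by ring]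
          linear_combination (b3 * u + c3 * v) * k5
        rw [this]
        exact k6.mul_left _
      · have h5 := h4 u v
        rw [← huv] at h5
        refine (dvd_sub_left ?_).mp h5
        have : v * (b4 * u + c4 * v) = v4 * (g * (b4 * u + c4 * v)) := by
          linear_combination (b4 * u + c4 * v) * k3
        rw [this]
        exact k4.mul_left _
    · intro Q hQ hQ0
      constructor
      · intro h
        rw [Prod.mk.injEq] at h
        exact hQ0 (lineLat_x hd hΔ (hMN hQ) h.1 h.2)
      · intro h
        exact hQ0 (lineLat_y hd (hMN hQ) h)

lemma line_cover (hq : 0 < q) (ha₁ : IsCoprime q a₁) (ha₂ : IsCoprime q a₂)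
    (hX : 4 * (X₁ * X₂) < (q : ℝ) ^ 3) (hY : 3 * (Y₁ * Y₂) < (q : ℝ) ^ 3)
    (S : Set (ℤ × ℤ × ℤ × ℤ))
    (hS : ∀ P ∈ S, Pt a₁ a₂ q κ X₁ X₂ Y₁ Y₂ P.1 P.2.1 P.2.2.1 P.2.2.2)
    (c : Fin 4 → ℤ) (hc : c ≠ 0) :
    ∃ 𝒞 : Finset (Set (ℤ × ℤ × ℤ × ℤ)),
      𝒞.card ≤ 2 + 2 * (c 0 * c 3 - c 1 * c 2).natAbs.divisors.card *
        (q ^ 3).natAbs.divisors.card ∧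
      (∀ C ∈ 𝒞, C ⊆ S ∧ (C.Subsingleton ∨ GoodLat a₁ a₂ q κ (Submodule.span ℤ C))) ∧
      ∀ P ∈ S, bil c P = 0 → ∃ C ∈ 𝒞, P ∈ C := by
  classical
  by_cases hΔ : c 0 * c 3 - c 1 * c 2 = 0
  · let C1 : Set (ℤ × ℤ × ℤ × ℤ) := {P | P ∈ S ∧ c 0 * P.2.2.1 + c 1 * P.2.2.2 = 0 ∧
      c 2 * P.2.2.1 + c 3 * P.2.2.2 = 0}
    let C2 : Set (ℤ × ℤ × ℤ × ℤ) := {P | P ∈ S ∧ c 0 * P.1 + c 2 * P.2.1 = 0 ∧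
      c 1 * P.1 + c 3 * P.2.1 = 0}
    have hcne : ∀ D : ℤ, c 0 * D = 0 → c 1 * D = 0 → c 2 * D = 0 → c 3 * D = 0 → D = 0 := by
      intro D h0 h1 h2 h3
      by_contra hD
      apply hc
      funext j
      fin_cases j
      · exact (mul_eq_zero.mp h0).resolve_right hD
      · exact (mul_eq_zero.mp h1).resolve_right hD
      · exact (mul_eq_zero.mp h2).resolve_right hD
      · exact (mul_eq_zero.mp h3).resolve_right hD
    refine ⟨{C1, C2}, Finset.card_le_two.trans (by omega), ?_, ?_⟩
    · intro C hC
      rw [Finset.mem_insert, Finset.mem_singleton] at hC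
      rcases hC with rfl | rfl
      · refine ⟨fun P hP => hP.1, Or.inl ?_⟩
        rintro P ⟨hP, h1, h2⟩ P' ⟨hP', h1', h2'⟩
        have hp := hS P hP
        have hp' := hS P' hP'
        have hy := prim_unique hp.py₁ hp.py₂ hp'.py₁ hp'.py₂ hp.cy hp'.cy (by
          rw [← sub_eq_zero]
          apply hcne
          · linear_combination P'.2.2.2 * h1 - P.2.2.2 * h1'
          · linear_combination -P'.2.2.1 * h1 + P.2.2.1 * h1'
          · linear_combination P'.2.2.2 * h2 - P.2.2.2 * h2'
          · linear_combination -P'.2.2.1 * h2 + P.2.2.1 * h2')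
        rw [← hy.1, ← hy.2] at hp'
        have hx := pt_same_y hq ha₁ ha₂ hp hp' hX
        exact Prod.ext hx.1 (Prod.ext hx.2 (Prod.ext hy.1 hy.2))
      · refine ⟨fun P hP => hP.1, Or.inl ?_⟩
        rintro P ⟨hP, h1, h2⟩ P' ⟨hP', h1', h2'⟩
        have hp := hS P hP
        have hp' := hS P' hP'
        have hx := prim_unique hp.px₁ hp.px₂ hp'.px₁ hp'.px₂ hp.cx hp'.cx (by
          rw [← sub_eq_zero]
          apply hcne
          · linear_combination P'.2.1 * h1 - P.2.1 * h1'
          · linear_combination P'.2.1 * h2 - P.2.1 * h2'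
          · linear_combination -P'.1 * h1 + P.1 * h1'
          · linear_combination -P'.1 * h2 + P.1 * h2')
        rw [← hx.1, ← hx.2] at hp'
        have hy := pt_same_x hq ha₂ hp hp' hY
        exact Prod.ext hx.1 (Prod.ext hx.2 (Prod.ext hy.1 hy.2))
    · intro P hP hb
      by_cases hA : c 0 * P.2.2.1 + c 1 * P.2.2.2 = 0 ∧ c 2 * P.2.2.1 + c 3 * P.2.2.2 = 0
      · exact ⟨C1, by simp, hP, hA.1, hA.2⟩
      · refine ⟨C2, by simp, hP, ?_⟩
        have hb' : P.1 * (c 0 * P.2.2.1 + c 1 * P.2.2.2) +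
            P.2.1 * (c 2 * P.2.2.1 + c 3 * P.2.2.2) = 0 := by
          rw [← hb, bil]; ring
        set A := c 0 * P.2.2.1 + c 1 * P.2.2.2 with hAdef
        set B := c 2 * P.2.2.1 + c 3 * P.2.2.2 with hBdef
        have k1 : c 0 * B = c 2 * A := by
          rw [hAdef, hBdef]; linear_combination P.2.2.2 * hΔ
        have k2 : c 1 * B = c 3 * A := by
          rw [hAdef, hBdef]; linear_combination -P.2.2.1 * hΔ
        have m1 : (c 0 * P.1 + c 2 * P.2.1) * A = 0 := by
          linear_combination c 0 * hb' - P.2.1 * k1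
        have m2 : (c 0 * P.1 + c 2 * P.2.1) * B = 0 := by
          linear_combination c 2 * hb' + P.1 * k1
        have m3 : (c 1 * P.1 + c 3 * P.2.1) * A = 0 := by
          linear_combination c 1 * hb' - P.2.1 * k2
        have m4 : (c 1 * P.1 + c 3 * P.2.1) * B = 0 := by
          linear_combination c 3 * hb' + P.1 * k2
        rw [not_and_or] at hA
        rcases hA with hA | hA
        · exact ⟨(mul_eq_zero.mp m1).resolve_right hA, (mul_eq_zero.mp m3).resolve_right hA⟩
        · exact ⟨(mul_eq_zero.mp m2).resolve_right hA, (mul_eq_zero.mp m4).resolve_right hA⟩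
  · have hlc : ∀ d : ℤ, ∃ 𝒞 : Finset (Set (ℤ × ℤ × ℤ × ℤ)),
        𝒞.card ≤ (q ^ 3).natAbs.divisors.card ∧
      (∀ C ∈ 𝒞, C ⊆ S ∧ (C.Subsingleton ∨ GoodLat a₁ a₂ q κ (Submodule.span ℤ C))) ∧
      (d ≠ 0 → ∀ P ∈ S, P ∈ lineLat c d → ∃ C ∈ 𝒞, P ∈ C) := by
      intro d
      by_cases hd : d = 0
      · exact ⟨∅, by simp, by simp, fun h => (h hd).elim⟩
      · obtain ⟨𝒞, h1, h2, h3⟩ := line_classes hq S hS c d hd hΔ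
        exact ⟨𝒞, h1, h2, fun _ => h3⟩
    choose F hF1 hF2 hF3 using hlc
    set Δ := c 0 * c 3 - c 1 * c 2 with hΔd
    let Ds : Finset ℤ := Δ.natAbs.divisors.image (fun n : ℕ => (n : ℤ)) ∪
      Δ.natAbs.divisors.image (fun n : ℕ => -(n : ℤ))
    have hDs : Ds.card ≤ 2 * Δ.natAbs.divisors.card := by
      refine (Finset.card_union_le _ _).trans ?_
      have e1 : (Δ.natAbs.divisors.image (fun n : ℕ => (n : ℤ))).card ≤ _ := Finset.card_image_le
      have e2 : (Δ.natAbs.divisors.image (fun n : ℕ => -(n : ℤ))).card ≤ _ := Finset.card_image_le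
      omega
    refine ⟨Ds.biUnion F, ?_, ?_, ?_⟩
    · refine (Finset.card_biUnion_le_card_mul _ _ _ (fun d _ => hF1 d)).trans ?_
      have := Nat.mul_le_mul_right (q ^ 3).natAbs.divisors.card hDs
      omega
    · intro C hC
      rw [Finset.mem_biUnion] at hC
      obtain ⟨d, -, hC⟩ := hC
      exact hF2 d C hC
    · intro P hP hb
      have hp := hS P hP
      have hb' : P.1 * (c 0 * P.2.2.1 + c 1 * P.2.2.2) +
          P.2.1 * (c 2 * P.2.2.1 + c 3 * P.2.2.2) = 0 := by
        rw [← hb, bil]; ring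
      have hdv : P.2.1 ∣ c 0 * P.2.2.1 + c 1 * P.2.2.2 := by
        refine hp.cx.symm.dvd_of_dvd_mul_left ?_
        exact ⟨-(c 2 * P.2.2.1 + c 3 * P.2.2.2), by linear_combination hb'⟩
      obtain ⟨d, hd⟩ := hdv
      have hd2 : d * P.1 = -(c 2 * P.2.2.1 + c 3 * P.2.2.2) := by
        apply mul_left_cancel₀ hp.px₂.ne'
        linear_combination hb' - P.1 * hd
      have hdΔ : d ∣ Δ := by
        obtain ⟨g, h, hgh⟩ := hp.cy
        refine ⟨g * (c 3 * P.2.1 + c 1 * P.1) - h * (c 0 * P.1 + c 2 * P.2.1), ?_⟩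
        rw [hΔd]
        linear_combination (g * c 3 - h * c 2) * hd - (g * c 1 - h * c 0) * hd2
          - (c 0 * c 3 - c 1 * c 2) * hgh
      have hd0 : d ≠ 0 := by
        rintro rfl
        exact hΔ (by simpa using hdΔ)
      have hdDs : d ∈ Ds := by
        have hm : d.natAbs ∈ Δ.natAbs.divisors := by
          rw [Nat.mem_divisors]
          exact ⟨Int.natAbs_dvd_natAbs.mpr hdΔ, by simpa using hΔ⟩
        rw [Finset.mem_union, Finset.mem_image, Finset.mem_image]
        rcases Int.natAbs_eq d with h | h
        · exact Or.inl ⟨d.natAbs, hm, h.symm⟩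
        · exact Or.inr ⟨d.natAbs, hm, h.symm⟩
      obtain ⟨C, hC, hPC⟩ := hF3 d hd0 P hP ⟨by linear_combination -hd, hd2⟩
      exact ⟨C, Finset.mem_biUnion.mpr ⟨d, hdDs, hC⟩, hPC⟩

end

/-! ### Assembly -/

lemma assemble (a₁ a₂ q κ : ℤ) (S : Set (ℤ × ℤ × ℤ × ℤ)) (𝒞 : Finset (Set (ℤ × ℤ × ℤ × ℤ)))
    (h : ∀ C ∈ 𝒞, C ⊆ S ∧ (C.Subsingleton ∨ GoodLat a₁ a₂ q κ (Submodule.span ℤ C)))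
    (hcov : ∀ P ∈ S, ∃ C ∈ 𝒞, P ∈ C) :
    ∃ (S' : Set (ℤ × ℤ × ℤ × ℤ)) (L : Finset (Submodule ℤ (ℤ × ℤ × ℤ × ℤ))),
      S' ⊆ S ∧ S'.ncard ≤ 𝒞.card ∧ L.card ≤ 𝒞.card ∧
      (∀ p ∈ S \ S', ∃ M ∈ L, p ∈ M) ∧ ∀ M ∈ L, GoodLat a₁ a₂ q κ M := by
  classical
  have hncard : ∀ 𝒟 : Finset (Set (ℤ × ℤ × ℤ × ℤ)), (∀ C ∈ 𝒟, C.Subsingleton) →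
      (⋃ C ∈ 𝒟, C).ncard ≤ 𝒟.card := by
    intro 𝒟 h𝒟
    induction 𝒟 using Finset.induction_on with
    | empty => simp
    | insert C 𝒟 hC ih =>
      rw [Finset.set_biUnion_insert, Finset.card_insert_of_notMem hC]
      have h1 := Set.ncard_union_le C (⋃ C ∈ 𝒟, C)
      have h2 : C.ncard ≤ 1 := by
        have hs := h𝒟 C (Finset.mem_insert_self _ _)
        rw [Set.ncard_le_one hs.finite]
        intro a ha b hb
        exact hs ha hb
      have h3 := ih (fun D hD => h𝒟 D (Finset.mem_insert_of_mem hD))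
      omega
  refine ⟨⋃ C ∈ 𝒞.filter (fun C => C.Subsingleton), C,
    (𝒞.filter (fun C => ¬ C.Subsingleton)).image (fun C => Submodule.span ℤ C), ?_, ?_, ?_, ?_, ?_⟩
  · intro p hp
    simp only [Set.mem_iUnion, Finset.mem_filter] at hp
    obtain ⟨C, ⟨hC, -⟩, hpC⟩ := hp
    exact (h C hC).1 hpC
  · refine (hncard _ ?_).trans (Finset.card_filter_le _ _)
    intro C hC
    exact (Finset.mem_filter.1 hC).2
  · exact Finset.card_image_le.trans (Finset.card_filter_le _ _)
  · rintro p ⟨hpS, hpn⟩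
    obtain ⟨C, hC, hpC⟩ := hcov p hpS
    refine ⟨Submodule.span ℤ C, Finset.mem_image_of_mem _ (Finset.mem_filter.2 ⟨hC, ?_⟩),
      Submodule.subset_span hpC⟩
    intro hs
    apply hpn
    simp only [Set.mem_iUnion, Finset.mem_filter]
    exact ⟨C, ⟨hC, hs⟩, hpC⟩
  · intro M hM
    obtain ⟨C, hC, rfl⟩ := Finset.mem_image.1 hM
    obtain ⟨hC1, hC2⟩ := Finset.mem_filter.1 hC
    exact (h C hC1).2.resolve_left hC2

lemma combine {a₁ a₂ q κ : ℤ} {X₁ X₂ Y₁ Y₂ : ℝ} (hq : 0 < q) (ha₁ : IsCoprime q a₁)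
    (ha₂ : IsCoprime q a₂) (hκ : IsCoprime q κ)
    (hX : 4 * (X₁ * X₂) < (q : ℝ) ^ 3) (hY : 3 * (Y₁ * Y₂) < (q : ℝ) ^ 3)
    (S : Set (ℤ × ℤ × ℤ × ℤ))
    (hS : ∀ P ∈ S, Pt a₁ a₂ q κ X₁ X₂ Y₁ Y₂ P.1 P.2.1 P.2.2.1 P.2.2.2)
    {H D : ℝ} (hH : 1 ≤ H)
    (hWH : ∀ j, 1200 * H ≤ (![X₁ * Y₁, X₁ * Y₂, X₂ * Y₁, X₂ * Y₂] : Fin 4 → ℝ) j)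
    (hprod : ∏ j, (![X₁ * Y₁, X₁ * Y₂, X₂ * Y₁, X₂ * Y₂] : Fin 4 → ℝ) j
      ≤ 65536 * (q : ℝ) ^ 6 * H ^ 3)
    (hD : ∀ c : Fin 4 → ℤ, (∀ j, |c j| ≤ q ^ 3) →
      ((c 0 * c 3 - c 1 * c 2).natAbs.divisors.card : ℝ) * ((q ^ 3).natAbs.divisors.card : ℝ) ≤ D) :
    ∃ 𝒞 : Finset (Set (ℤ × ℤ × ℤ × ℤ)), (𝒞.card : ℝ) ≤ 1875000000 * H * (2 + 2 * D) ∧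
      (∀ C ∈ 𝒞, C ⊆ S ∧ (C.Subsingleton ∨ GoodLat a₁ a₂ q κ (Submodule.span ℤ C))) ∧
      ∀ P ∈ S, ∃ C ∈ 𝒞, P ∈ C := by
  classical
  obtain ⟨Hs, hcard, hHs, hcov⟩ := hyperplane_cover hq ha₁ ha₂ hκ hH hWH hprod
  have hl := fun (c : Fin 4 → ℤ) (hc : c ≠ 0) => line_cover (κ := κ) hq ha₁ ha₂ hX hY S hS c hc
  choose F hF1 hF2 hF3 using hl
  let G : (Fin 4 → ℤ) → Finset (Set (ℤ × ℤ × ℤ × ℤ)) :=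
    fun c => if hc : c ≠ 0 then F c hc else ∅
  have hD0 : 0 ≤ D := le_trans (by positivity) (hD 0 (by intro j; simp; positivity))
  refine ⟨Hs.biUnion G, ?_, ?_, ?_⟩
  · have h1 : ((Hs.biUnion G).card : ℝ) ≤ ∑ c ∈ Hs, ((G c).card : ℝ) := by
      exact_mod_cast Finset.card_biUnion_le
    have h2 : ∑ c ∈ Hs, ((G c).card : ℝ) ≤ ∑ _c ∈ Hs, (2 + 2 * D) := by
      refine Finset.sum_le_sum fun c hc => ?_
      have hne := (hHs c hc).1
      have hG : G c = F c hne := by simp [G, hne]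
      rw [hG]
      have h3 : ((F c hne).card : ℝ) ≤ 2 + 2 * ((c 0 * c 3 - c 1 * c 2).natAbs.divisors.card : ℝ) *
          ((q ^ 3).natAbs.divisors.card : ℝ) := by
        exact_mod_cast hF1 c hne
      have h4 := hD c (hHs c hc).2
      linarith
    rw [Finset.sum_const, nsmul_eq_mul] at h2
    have h5 : (Hs.card : ℝ) * (2 + 2 * D) ≤ 1875000000 * H * (2 + 2 * D) :=
      mul_le_mul_of_nonneg_right hcard (by linarith)
    linarith
  · intro C hC
    obtain ⟨c, hc, hCG⟩ := Finset.mem_biUnion.1 hC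
    have hne := (hHs c hc).1
    have hG : G c = F c hne := by simp [G, hne]
    rw [hG] at hCG
    exact hF2 c hne C hCG
  · intro P hP
    have hPt := hS P hP
    obtain ⟨-, -, k1, k2, k3⟩ := hPt.cong
    have ix₁ : (0 : ℝ) < P.1 := by exact_mod_cast hPt.px₁
    have ix₂ : (0 : ℝ) < P.2.1 := by exact_mod_cast hPt.px₂
    have iy₁ : (0 : ℝ) < P.2.2.1 := by exact_mod_cast hPt.py₁
    have iy₂ : (0 : ℝ) < P.2.2.2 := by exact_mod_cast hPt.py₂
    obtain ⟨c, hc, hsum⟩ := hcov ![P.1 * P.2.2.1, P.1 * P.2.2.2, P.2.1 * P.2.2.1, P.2.1 * P.2.2.2]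
      (by
        refine ⟨?_, ?_, ?_⟩
        · convert k1 using 1
          simp [Matrix.cons_val]; ring
        · convert k2 using 1
          simp [Matrix.cons_val]; ring
        · convert k3 using 1
          simp [Matrix.cons_val]; ring)
      (by
        intro j
        have b1 := hPt.bx₁
        have b2 := hPt.bx₂
        have b3 := hPt.by₁
        have b4 := hPt.by₂
        fin_cases j <;> simp [Matrix.cons_val] <;>
          (rw [abs_of_pos (by assumption), abs_of_pos (by assumption)]
           exact mul_le_mul (by assumption) (by assumption) (le_of_lt (by assumption)) (by linarith)))
    have hne := (hHs c hc).1
    have hG : G c = F c hne := by simp [G, hne]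
    obtain ⟨C, hC, hPC⟩ := hF3 c hne P hP (by
      rw [Fin.sum_univ_four] at hsum
      simpa [bil, Matrix.cons_val] using hsum)
    exact ⟨C, Finset.mem_biUnion.2 ⟨c, hc, by rw [hG]; exact hC⟩, hPC⟩

lemma small_count {a₁ a₂ q κ : ℤ} {X₁ X₂ Y₁ Y₂ : ℝ} (N : ℕ) (hX₁ : X₁ ≤ N) (hX₂ : X₂ ≤ N)
    (hY₁ : Y₁ ≤ N) (hY₂ : Y₂ ≤ N) (S : Set (ℤ × ℤ × ℤ × ℤ))
    (hS : ∀ P ∈ S, Pt a₁ a₂ q κ X₁ X₂ Y₁ Y₂ P.1 P.2.1 P.2.2.1 P.2.2.2) :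
    S.ncard ≤ N * (N * (N * N)) := by
  let T : Finset (ℤ × ℤ × ℤ × ℤ) :=
    Finset.Icc 1 (N : ℤ) ×ˢ Finset.Icc 1 (N : ℤ) ×ˢ Finset.Icc 1 (N : ℤ) ×ˢ Finset.Icc 1 (N : ℤ)
  have hT : T.card = N * (N * (N * N)) := by
    simp [T, Finset.card_product]
  have hST : S ⊆ (T : Set (ℤ × ℤ × ℤ × ℤ)) := by
    intro P hP
    have h := hS P hP
    have b1 : P.1 ≤ N := by exact_mod_cast h.bx₁.trans hX₁
    have b2 : P.2.1 ≤ N := by exact_mod_cast h.bx₂.trans hX₂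
    have b3 : P.2.2.1 ≤ N := by exact_mod_cast h.by₁.trans hY₁
    have b4 : P.2.2.2 ≤ N := by exact_mod_cast h.by₂.trans hY₂
    have c1 := h.px₁
    have c2 := h.px₂
    have c3 := h.py₁
    have c4 := h.py₂
    simp only [T, Finset.coe_product, Set.mem_prod, Finset.coe_Icc, Set.mem_Icc]
    refine ⟨⟨?_, b1⟩, ⟨?_, b2⟩, ⟨?_, b3⟩, ?_, b4⟩ <;> omega
  have := Set.ncard_le_ncard hST (Finset.finite_toSet T)
  rw [Set.ncard_coe_finset, hT] at this
  exact this

lemma div_count (η : ℝ) (hη : 0 < η) : ∃ K : ℝ, 1 ≤ K ∧ ∀ (q : ℤ) (B : ℝ), 0 < q → (q : ℝ) ≤ B →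
    ∀ c : Fin 4 → ℤ, (∀ j, |c j| ≤ q ^ 3) →
      ((c 0 * c 3 - c 1 * c 2).natAbs.divisors.card : ℝ) * ((q ^ 3).natAbs.divisors.card : ℝ) ≤
        K * B ^ (9 * η) := by
  obtain ⟨C, hC1, hC⟩ := divisor_bound η hη
  refine ⟨C * C * 2 ^ η, ?_, ?_⟩
  · have : (1 : ℝ) ≤ 2 ^ η := Real.one_le_rpow (by norm_num) hη.le
    nlinarith [mul_le_mul hC1 hC1 zero_le_one (by linarith)]
  intro q B hq hqB c hc
  have hq0 : (0 : ℝ) < q := by exact_mod_cast hq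
  have hB : 0 < B := by linarith
  have e1 : ((q ^ 3).natAbs.divisors.card : ℝ) ≤ C * (B ^ 3) ^ η := by
    refine (hC _ (by simp; omega)).trans ?_
    have : (((q ^ 3).natAbs : ℕ) : ℝ) = (q : ℝ) ^ 3 := by
      rw [Nat.cast_natAbs, abs_of_pos (by positivity)]; push_cast; rfl
    rw [this]
    gcongr
  have e2 : ((c 0 * c 3 - c 1 * c 2).natAbs.divisors.card : ℝ) ≤ C * (2 * B ^ 6) ^ η := by
    by_cases h0 : (c 0 * c 3 - c 1 * c 2).natAbs = 0
    · rw [h0]; simp; positivity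
    refine (hC _ h0).trans ?_
    have : (((c 0 * c 3 - c 1 * c 2).natAbs : ℕ) : ℝ) ≤ 2 * (q : ℝ) ^ 6 := by
      rw [Nat.cast_natAbs]
      have hz : |c 0 * c 3 - c 1 * c 2| ≤ 2 * q ^ 6 := by
        have h1 := mul_le_mul (hc 0) (hc 3) (abs_nonneg _) (by positivity)
        have h2 := mul_le_mul (hc 1) (hc 2) (abs_nonneg _) (by positivity)
        have h3 := abs_sub (c 0 * c 3) (c 1 * c 2)
        rw [abs_mul, abs_mul] at h3
        nlinarith
      exact_mod_cast hz
    have h6 : 2 * (q : ℝ) ^ 6 ≤ 2 * B ^ 6 := by gcongr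
    gcongr
    linarith
  refine (mul_le_mul e2 e1 (by positivity) (by positivity)).trans (le_of_eq ?_)
  rw [Real.mul_rpow (by norm_num) (by positivity), ← Real.rpow_natCast B 6, ← Real.rpow_natCast B 3,
    ← Real.rpow_mul hB.le, ← Real.rpow_mul hB.le]
  have : B ^ (9 * η) = B ^ (((6 : ℕ) : ℝ) * η) * B ^ (((3 : ℕ) : ℝ) * η) := by
    rw [← Real.rpow_add hB]; congr 1; push_cast; ring
  rw [this]; ring

lemma pow_of_rpow {B t : ℝ} (hB : 0 ≤ B) (ht : t = B ^ ((1 : ℝ) / 180)) (n : ℕ) :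
    t ^ n = B ^ ((n : ℝ) / 180) := by
  rw [ht, ← Real.rpow_natCast, ← Real.rpow_mul hB]
  congr 1
  ring

lemma H_cube {B u v : ℝ} (hB : 0 < B) (hu : 0 < u) (hv : 0 < v) :
    (u ^ (-(1 : ℝ) / 3) * v ^ (-2 : ℝ) * B ^ ((2 : ℝ) / 3)) ^ 3 * (u * v ^ 6) = B ^ 2 := by
  have e1 : (u ^ (-(1 : ℝ) / 3)) ^ 3 = u⁻¹ := by
    rw [← Real.rpow_natCast, ← Real.rpow_mul hu.le, ← Real.rpow_neg_one]
    congr 1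
    norm_num
  have e2 : (v ^ (-2 : ℝ)) ^ 3 = (v ^ 6)⁻¹ := by
    rw [← Real.rpow_natCast, ← Real.rpow_mul hv.le, ← Real.rpow_natCast v 6, ← Real.rpow_neg hv.le]
    congr 1
    norm_num
  have e3 : (B ^ ((2 : ℝ) / 3)) ^ 3 = B ^ 2 := by
    rw [← Real.rpow_natCast, ← Real.rpow_mul hB.le, ← Real.rpow_natCast B 2]
    congr 1
    norm_num
  rw [mul_pow, mul_pow, e1, e2, e3]
  field_simp

/-- Covering `S(q, κ)` by lines: apart from a small exceptional set `S₀(q, κ)`, the set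
`S(q, κ)` is covered by a small collection of rank-two lattices `𝖬 ⊂ ℤ⁴` on which the
congruences (c1)–(c4) hold identically; each lattice contains a point with
`a₁x₁²y₁³ + a₂x₂²y₂³ ≠ 0`, and no nonzero point of a lattice has `(x₁, x₂) = (0, 0)` or
`(y₁, y₂) = (0, 0)`. -/
theorem covering_by_lines (ε : ℝ) (hε : 0 < ε) :
    ∃ C : ℝ, 0 < C ∧ ∀ (a : Fin 3 → ℤ) (X Y : Fin 3 → ℝ) (B : ℝ),
      2 ≤ B → (∀ i, a i ≠ 0) → (∀ i, Squarefree (a i)) →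
      (∀ i j, i ≠ j → IsCoprime (a i) (a j)) →
      (∀ i, 1 ≤ X i) → (∀ i, 1 ≤ Y i) →
      (∀ i, X i ^ 2 * Y i ^ 3 ≤ 32 * B / |(a i : ℝ)|) →
      (∀ i, B ^ ((1 : ℝ) / 5 - 1 / 60) ≤ X i ∧ X i ≤ B ^ ((1 : ℝ) / 5 + 1 / 60)) →
      (∀ i, B ^ ((1 : ℝ) / 5 - 1 / 90) ≤ Y i ∧ Y i ≤ B ^ ((1 : ℝ) / 5 + 1 / 90)) →
      ∀ q κ : ℤ, Squarefree q → Y 2 / 2 < (q : ℝ) → (q : ℝ) ≤ Y 2 →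
        IsCoprime q (a 0 * a 1) → IsCoprime κ q →
        ∃ (S' : Set (ℤ × ℤ × ℤ × ℤ)) (L : Finset (Submodule ℤ (ℤ × ℤ × ℤ × ℤ))),
          S' ⊆ SqK a X Y q κ ∧
          (S'.ncard : ℝ) ≤
            C * (Y 0 * Y 1) ^ (-(1 : ℝ) / 3) * Y 2 ^ (-2 : ℝ) * B ^ ((2 : ℝ) / 3 + ε) ∧
          (L.card : ℝ) ≤
            C * (Y 0 * Y 1) ^ (-(1 : ℝ) / 3) * Y 2 ^ (-2 : ℝ) * B ^ ((2 : ℝ) / 3 + ε) ∧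
          (∀ p ∈ SqK a X Y q κ \ S', ∃ M ∈ L, p ∈ M) ∧
          (∀ M ∈ L, Module.finrank ℤ M = 2 ∧
            (∀ p : ℤ × ℤ × ℤ × ℤ, p ∈ M →
              Congs (a 0) (a 1) q κ p.1 p.2.1 p.2.2.1 p.2.2.2) ∧
            (∃ p : ℤ × ℤ × ℤ × ℤ, p ∈ M ∧
              a 0 * p.1 ^ 2 * p.2.2.1 ^ 3 + a 1 * p.2.1 ^ 2 * p.2.2.2 ^ 3 ≠ 0) ∧
            (∀ p : ℤ × ℤ × ℤ × ℤ, p ∈ M → p ≠ 0 →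
              (p.1, p.2.1) ≠ (0, 0) ∧ (p.2.2.1, p.2.2.2) ≠ (0, 0))) := by
  obtain ⟨K, hK1, hK⟩ := div_count (ε / 9) (by positivity)
  refine ⟨1875000000 * (2 + 2 * K) + 2 ^ 156, by positivity, ?_⟩
  intro a X Y B hB ha _ _ hX1 hY1 hXY hX hY q κ _ hqY1 hqY2 hqa hκ
  have hB0 : 0 < B := by linarith
  have hB1 : 1 ≤ B := by linarith
  obtain ⟨t, ht⟩ : ∃ t, t = B ^ ((1 : ℝ) / 180) := ⟨_, rfl⟩
  have htp := pow_of_rpow hB0.le ht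
  have ht1 : 1 ≤ t := by rw [ht]; exact Real.one_le_rpow hB1 (by norm_num)
  have ht0 : 0 < t := by linarith
  have hBt : B = t ^ 180 := by rw [htp]; norm_num
  have hXl : ∀ i, t ^ 33 ≤ X i := fun i => by
    rw [htp]; refine le_trans (le_of_eq ?_) (hX i).1; congr 1; norm_num
  have hXu : ∀ i, X i ≤ t ^ 39 := fun i => by
    rw [htp]; refine (hX i).2.trans (le_of_eq ?_); congr 1; norm_num
  have hYl : ∀ i, t ^ 34 ≤ Y i := fun i => by
    rw [htp]; refine le_trans (le_of_eq ?_) (hY i).1; congr 1; norm_num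
  have hYu : ∀ i, Y i ≤ t ^ 38 := fun i => by
    rw [htp]; refine (hY i).2.trans (le_of_eq ?_); congr 1; norm_num
  have hX0 : ∀ i, 0 < X i := fun i => by linarith [hX1 i]
  have hY0 : ∀ i, 0 < Y i := fun i => by linarith [hY1 i]
  have hqr : (0 : ℝ) < q := by linarith [hY0 2]
  have hq : 0 < q := by exact_mod_cast hqr
  have hqB : (q : ℝ) ≤ B := by
    rw [hBt]
    exact hqY2.trans ((hYu 2).trans (pow_le_pow_right₀ ht1 (by norm_num)))
  have hS := pt_of_mem a X Y q κ ha hq hqa hκ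
  obtain ⟨H, hHdef⟩ : ∃ H, H = (Y 0 * Y 1) ^ (-(1 : ℝ) / 3) * Y 2 ^ (-2 : ℝ) * B ^ ((2 : ℝ) / 3) :=
    ⟨_, rfl⟩
  have hH0 : 0 < H := by
    rw [hHdef]
    have := hY0 0
    have := hY0 1
    have := hY0 2
    positivity
  have hH3 : H ^ 3 * (Y 0 * Y 1 * Y 2 ^ 6) = t ^ 360 := by
    rw [hHdef, H_cube hB0 (mul_pos (hY0 0) (hY0 1)) (hY0 2), hBt]; ring
  have hP0 : 0 < Y 0 * Y 1 * Y 2 ^ 6 := by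
    have := hY0 0
    have := hY0 1
    have := hY0 2
    positivity
  have hPu : Y 0 * Y 1 * Y 2 ^ 6 ≤ t ^ 304 := by
    have h1 := mul_le_mul (hYu 0) (hYu 1) (hY0 1).le (by positivity)
    have h2 : Y 2 ^ 6 ≤ (t ^ 38) ^ 6 := pow_le_pow_left₀ (hY0 2).le (hYu 2) 6
    refine (mul_le_mul h1 h2 (pow_nonneg (hY0 2).le 6) (by positivity)).trans (le_of_eq (by ring))
  have hPl : t ^ 272 ≤ Y 0 * Y 1 * Y 2 ^ 6 := by
    have h1 := mul_le_mul (hYl 0) (hYl 1) (by positivity) (hY0 0).le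
    have h2 : (t ^ 34) ^ 6 ≤ Y 2 ^ 6 := pow_le_pow_left₀ (by positivity) (hYl 2) 6
    refine le_trans (le_of_eq (by ring)) (mul_le_mul h1 h2 (by positivity)
      (mul_pos (hY0 0) (hY0 1)).le)
  have hH1 : 1 ≤ H := by
    by_contra hlt
    push Not at hlt
    have h1 : H ^ 3 < 1 := pow_lt_one₀ hH0.le hlt (by norm_num)
    have h2 : t ^ 304 ≤ t ^ 360 := pow_le_pow_right₀ ht1 (by norm_num)
    have h3 : H ^ 3 * (Y 0 * Y 1 * Y 2 ^ 6) < 1 * (Y 0 * Y 1 * Y 2 ^ 6) :=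
      mul_lt_mul_of_pos_right h1 hP0
    linarith
  have hHu : H ≤ t ^ 30 := by
    by_contra hlt
    push Not at hlt
    have h1 : (t ^ 30) ^ 3 < H ^ 3 := pow_lt_pow_left₀ hlt (by positivity) (by norm_num)
    have h2 : (t ^ 30) ^ 3 * t ^ 272 < H ^ 3 * (Y 0 * Y 1 * Y 2 ^ 6) :=
      mul_lt_mul h1 hPl (by positivity) (by positivity)
    have h3 : t ^ 360 ≤ t ^ 362 := pow_le_pow_right₀ ht1 (by norm_num)
    have h4 : (t ^ 30) ^ 3 * t ^ 272 = t ^ 362 := by ring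
    linarith
  have hBε : 1 ≤ B ^ ε := Real.one_le_rpow hB1 hε.le
  have hR : ∀ C : ℝ, C * (Y 0 * Y 1) ^ (-(1 : ℝ) / 3) * Y 2 ^ (-2 : ℝ) * B ^ ((2 : ℝ) / 3 + ε) =
      C * (H * B ^ ε) := by
    intro C
    rw [Real.rpow_add hB0, hHdef]; ring
  rw [hR]
  have hHB : 1 ≤ H * B ^ ε := one_le_mul_of_one_le_of_one_le hH1 hBε
  rcases le_total t 2 with ht2 | ht2
  · refine ⟨SqK a X Y q κ, ∅, subset_rfl, ?_, ?_, ?_, ?_⟩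
    · have hXN : ∀ i, X i ≤ ((2 ^ 39 : ℕ) : ℝ) := fun i => by
        rw [Nat.cast_pow, Nat.cast_ofNat]
        exact (hXu i).trans (pow_le_pow_left₀ ht0.le ht2 39)
      have hYN : ∀ i, Y i ≤ ((2 ^ 39 : ℕ) : ℝ) := fun i => by
        rw [Nat.cast_pow, Nat.cast_ofNat]
        exact ((hYu i).trans (pow_le_pow_right₀ ht1 (by norm_num : 38 ≤ 39))).trans
          (pow_le_pow_left₀ ht0.le ht2 39)
      have h1 := small_count (2 ^ 39) (hXN 0) (hXN 1) (hYN 0) (hYN 1) _ hS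
      have h2 : ((SqK a X Y q κ).ncard : ℝ) ≤ 2 ^ 156 := by
        have : (2 ^ 39 * (2 ^ 39 * (2 ^ 39 * 2 ^ 39)) : ℕ) = 2 ^ 156 := by norm_num
        rw [this] at h1
        exact_mod_cast h1
      have h3 : (2 : ℝ) ^ 156 ≤ (1875000000 * (2 + 2 * K) + 2 ^ 156) * (H * B ^ ε) := by
        have h4 : (2 : ℝ) ^ 156 ≤ 1875000000 * (2 + 2 * K) + 2 ^ 156 := by linarith
        have h5 : (0 : ℝ) ≤ 1875000000 * (2 + 2 * K) + 2 ^ 156 := by linarith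
        exact h4.trans (le_mul_of_one_le_right h5 hHB)
      linarith
    · simp only [Finset.card_empty, Nat.cast_zero]
      positivity
    · rintro p ⟨h1, h2⟩
      exact absurd h1 h2
    · intro M hM
      simp at hM
  · have hqa0 : IsCoprime q (a 0) := hqa.of_mul_right_left
    have hqa1 : IsCoprime q (a 1) := hqa.of_mul_right_right
    have hq3 : t ^ 102 < 8 * (q : ℝ) ^ 3 := by
      have h1 : t ^ 34 < 2 * q := by linarith [hYl 2]
      have h2 := pow_lt_pow_left₀ h1 (by positivity) (n := 3) (by norm_num)
      calc t ^ 102 = (t ^ 34) ^ 3 := by ring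
        _ < (2 * (q : ℝ)) ^ 3 := h2
        _ = 8 * (q : ℝ) ^ 3 := by ring
    have h32 : (32 : ℝ) ≤ t ^ 24 := by
      have := pow_le_pow_left₀ (by norm_num) ht2 24
      norm_num at this
      linarith
    have h78 : 32 * t ^ 78 ≤ t ^ 102 := by
      calc 32 * t ^ 78 ≤ t ^ 24 * t ^ 78 := by gcongr
        _ = t ^ 102 := by ring
    have hXX : 4 * (X 0 * X 1) < (q : ℝ) ^ 3 := by
      have h1 := mul_le_mul (hXu 0) (hXu 1) (hX0 1).le (by positivity)
      have h2 : t ^ 39 * t ^ 39 = t ^ 78 := by ring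
      linarith
    have hYY : 3 * (Y 0 * Y 1) < (q : ℝ) ^ 3 := by
      have h1 := mul_le_mul (hYu 0) (hYu 1) (hY0 1).le (by positivity)
      have h2 : t ^ 38 * t ^ 38 ≤ t ^ 78 := by
        rw [← pow_add]; exact pow_le_pow_right₀ ht1 (by norm_num)
      have h3 : 0 < t ^ 78 := by positivity
      linarith
    have hW : ∀ i j, 1200 * H ≤ X i * Y j := by
      intro i j
      have h1 := mul_le_mul (hXl i) (hYl j) (by positivity) (hX0 i).le
      have h2 : (1200 : ℝ) ≤ t ^ 37 := by
        have := pow_le_pow_left₀ (by norm_num) ht2 37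
        norm_num at this
        linarith
      have h3 : t ^ 33 * t ^ 34 = t ^ 37 * t ^ 30 := by ring
      have h4 : 1200 * H ≤ t ^ 37 * t ^ 30 := mul_le_mul h2 hHu hH0.le (by positivity)
      linarith
    have hXY' : ∀ i, X i ^ 2 * Y i ^ 3 ≤ 32 * B := by
      intro i
      refine (hXY i).trans (div_le_self (by linarith) ?_)
      have : (1 : ℤ) ≤ |a i| := Int.one_le_abs (ha i)
      exact_mod_cast this
    have hprod : (X 0 * Y 0) * (X 0 * Y 1) * (X 1 * Y 0) * (X 1 * Y 1)
        ≤ 65536 * (q : ℝ) ^ 6 * H ^ 3 := by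
      have h1 := mul_le_mul (hXY' 0) (hXY' 1)
        (mul_nonneg (pow_nonneg (hX0 1).le 2) (pow_nonneg (hY0 1).le 3)) (by linarith)
      have h2 : (Y 0 * Y 1) * ((X 0 * Y 0) * (X 0 * Y 1) * (X 1 * Y 0) * (X 1 * Y 1)) ≤
          (Y 0 * Y 1) * (1024 * (Y 2 ^ 6 * H ^ 3)) := by
        have h3 : (Y 0 * Y 1) * (1024 * (Y 2 ^ 6 * H ^ 3)) = 32 * B * (32 * B) := by
          have : (Y 0 * Y 1) * (1024 * (Y 2 ^ 6 * H ^ 3)) =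
            1024 * (H ^ 3 * (Y 0 * Y 1 * Y 2 ^ 6)) := by ring
          rw [this, hH3, hBt]; ring
        rw [h3]
        refine le_trans (le_of_eq (by ring)) h1
      have h4 := le_of_mul_le_mul_left h2 (mul_pos (hY0 0) (hY0 1))
      have h5 : Y 2 ^ 6 ≤ (2 * (q : ℝ)) ^ 6 :=
        pow_le_pow_left₀ (hY0 2).le (by linarith) 6
      have h6 : Y 2 ^ 6 * H ^ 3 ≤ (2 * (q : ℝ)) ^ 6 * H ^ 3 :=
        mul_le_mul_of_nonneg_right h5 (by positivity)
      have h7 : (2 * (q : ℝ)) ^ 6 * H ^ 3 = 64 * ((q : ℝ) ^ 6 * H ^ 3) := by ring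
      linarith
    obtain ⟨𝒞, hcard, hgood, hcov⟩ := combine (D := K * B ^ ε) hq hqa0 hqa1 hκ.symm hXX hYY
      (SqK a X Y q κ) hS hH1
      (by
        intro j
        fin_cases j
        · exact hW 0 0
        · exact hW 0 1
        · exact hW 1 0
        · exact hW 1 1)
      (by
        rw [Fin.prod_univ_four]
        exact hprod)
      (by
        intro c hc
        have := hK q B hq hqB c hc
        rwa [show 9 * (ε / 9) = ε by ring] at this)
    have hfin : (𝒞.card : ℝ) ≤ (1875000000 * (2 + 2 * K) + 2 ^ 156) * (H * B ^ ε) := by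
      refine hcard.trans ?_
      have h1 : 2 + 2 * (K * B ^ ε) ≤ (2 + 2 * K) * B ^ ε := by linarith
      have h2 : 1875000000 * H * (2 + 2 * (K * B ^ ε)) ≤
          1875000000 * H * ((2 + 2 * K) * B ^ ε) :=
        mul_le_mul_of_nonneg_left h1 (by positivity)
      have h3 : (0 : ℝ) ≤ 2 ^ 156 * (H * B ^ ε) := by positivity
      linarith
    obtain ⟨S', L, hS', hc1, hc2, hcv, hL⟩ := assemble (a 0) (a 1) q κ _ 𝒞 hgood hcov
    refine ⟨S', L, hS', ?_, ?_, hcv, hL⟩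
    · exact le_trans (by exact_mod_cast hc1) hfin
    · exact le_trans (by exact_mod_cast hc2) hfin
end

section
/- There is an absolute constant C such that, with the notation of the context, the set S₁(B) of points (x₁, x₂, x₃, y₁, y₂, y₃) ∈ S₀(B) for which there exist nonzero rationals g and ν with a₂x₁ = ν(4a₁y₁ − 5g²a₂y₂) and a₁x₂ = νg³(5a₁y₁ − 4g²a₂y₂) satisfies #S₁(B) ≤ C · B^{1/2}. -/
lemma aux_parity (p m n Q Z : ℤ) (hp : Prime p) (hm : ¬ p ∣ m) (hn : ¬ p ∣ n)
    (hZ : Z ≠ 0) (h : p * m * Q ^ 2 = n * Z ^ 2) : False := by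
  have hn0 : n ≠ 0 := by rintro rfl; exact hn (dvd_zero _)
  have hm0 : m ≠ 0 := by rintro rfl; exact hm (dvd_zero _)
  have hQ : Q ≠ 0 := by
    rintro rfl
    have : n * Z ^ 2 ≠ 0 := mul_ne_zero hn0 (pow_ne_zero _ hZ)
    apply this; rw [← h]; ring
  have e := congrArg (multiplicity p) h
  have f1 : FiniteMultiplicity p (p * m * Q ^ 2) :=
    Int.finiteMultiplicity_iff.2 ⟨fun h => hp.not_isUnit (Int.isUnit_iff_natAbs_eq.2 h),
      mul_ne_zero (mul_ne_zero hp.ne_zero hm0) (pow_ne_zero _ hQ)⟩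
  have f2 : FiniteMultiplicity p (n * Z ^ 2) := h ▸ f1
  have fQ : FiniteMultiplicity p Q :=
    Int.finiteMultiplicity_iff.2 ⟨fun h => hp.not_isUnit (Int.isUnit_iff_natAbs_eq.2 h), hQ⟩
  have fZ : FiniteMultiplicity p Z :=
    Int.finiteMultiplicity_iff.2 ⟨fun h => hp.not_isUnit (Int.isUnit_iff_natAbs_eq.2 h), hZ⟩
  have f1' : FiniteMultiplicity p (p * m) := f1.mul_left
  rw [multiplicity_mul hp f1, multiplicity_mul hp f1', multiplicity_mul hp f2,
    fQ.multiplicity_pow hp, fZ.multiplicity_pow hp,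
    multiplicity_eq_zero.2 hm, multiplicity_eq_zero.2 hn, multiplicity_self] at e
  omega

lemma aux_val (p s r c1 c2 c3 Q Z : ℤ) (hp : Prime p) (hs : p ∣ s) (hc : p ∣ c2)
    (hsq : Squarefree c2) (hr : ¬ p ∣ r) (h3 : ¬ p ∣ c3) (hZ : Z ≠ 0)
    (h : (s ^ 2 * c1 + r ^ 2 * c2) * Q ^ 2 = - c3 * Z ^ 2) : False := by
  obtain ⟨e, rfl⟩ := hs
  obtain ⟨d, rfl⟩ := hc
  have hd : ¬ p ∣ d := by
    intro hd
    exact hp.not_isUnit (hsq p (mul_dvd_mul_left p hd))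
  refine aux_parity p (p * e ^ 2 * c1 + r ^ 2 * d) (-c3) Q Z hp ?_ ?_ hZ ?_
  · intro hh
    have h1 : p ∣ r ^ 2 * d := by
      have e0 : r ^ 2 * d = (p * e ^ 2 * c1 + r ^ 2 * d) - p * (e ^ 2 * c1) := by ring
      rw [e0]
      exact dvd_sub hh (dvd_mul_right _ _)
    rcases hp.dvd_or_dvd h1 with h2 | h2
    · exact hr (hp.dvd_of_dvd_pow h2)
    · exact hd h2
  · rwa [dvd_neg]
  · rw [← h]; ring

lemma aux_cop (p q : ℤ) (h : ∀ l : ℤ, Prime l → l ∣ p → l ∣ q → False) (h0 : p ≠ 0) :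
    IsCoprime p q := by
  apply isCoprime_of_prime_dvd
  · rintro ⟨h1, -⟩; exact h0 h1
  · intro l hl h1 h2; exact h l hl h1 h2

lemma aux_pair (c1 c2 c3 z1 z2 z3 m1 m2 m3 : ℤ) (hz : z1 ≠ 0) (hm : m3 ∣ z3)
    (hc : IsCoprime c3 z1)
    (hg : ∀ l : ℤ, Prime l → l ∣ z1 → l ∣ z2 → l ∣ z3 → False)
    (h : c1 * z1 ^ 2 * m1 + c2 * z2 ^ 2 * m2 + c3 * z3 ^ 2 * m3 = 0) : IsCoprime z1 z2 := by
  apply aux_cop _ _ _ hz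
  intro l hl h1 h2
  have h3 : l ∣ c3 * z3 ^ 2 * m3 := by
    have e : c3 * z3 ^ 2 * m3 = z1 * (-(c1 * z1 * m1)) + z2 * (-(c2 * z2 * m2)) := by
      linear_combination h
    rw [e]
    exact dvd_add (h1.mul_right _) (h2.mul_right _)
  apply hg l hl h1 h2
  rcases hl.dvd_or_dvd h3 with h4 | h4
  · rcases hl.dvd_or_dvd h4 with h5 | h5
    · exact absurd (hc.isUnit_of_dvd' h5 h1) hl.not_isUnit
    · exact hl.dvd_of_dvd_pow h5
  · exact h4.trans hm

lemma aux_real1 (u v T : ℝ) (h : |v| ≤ |u|) (h1 : |u * (4 * u - 5 * v)| ≤ T)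
    (h2 : |v * (5 * u - 4 * v)| ≤ T) : u ^ 2 ≤ 3 * T := by
  by_cases hu : u = 0
  · subst hu
    have := (abs_nonneg _).trans h1
    simpa using this
  have hup : 0 < |u| := abs_pos.2 hu
  have hT : 0 ≤ T := (abs_nonneg _).trans h1
  have e : 144 * u ^ 5 = (36 * u ^ 2 + 45 * (u * v) - 100 * v ^ 2) * u * (u * (4 * u - 5 * v))
      + 125 * u ^ 2 * v * (v * (5 * u - 4 * v)) := by ring
  have hP : |36 * u ^ 2 + 45 * (u * v) - 100 * v ^ 2| ≤ 181 * |u| ^ 2 := by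
    have ha : |v| ^ 2 ≤ |u| ^ 2 := pow_le_pow_left₀ (abs_nonneg _) h 2
    have hb : |u * v| ≤ |u| ^ 2 := by rw [abs_mul, sq]; gcongr
    rw [sq_abs] at *
    rw [sq_abs] at ha
    rw [abs_le] at hb ⊢
    constructor <;> nlinarith [sq_nonneg u, sq_nonneg v]
  have e2 : 144 * |u| ^ 5 ≤ 181 * |u| ^ 2 * |u| * T + 125 * |u| ^ 2 * |u| * T := by
    calc 144 * |u| ^ 5 = |144 * u ^ 5| := by rw [abs_mul, abs_pow]; norm_num
      _ ≤ |36 * u ^ 2 + 45 * (u * v) - 100 * v ^ 2| * |u| * |u * (4 * u - 5 * v)|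
        + 125 * |u| ^ 2 * |v| * |v * (5 * u - 4 * v)| := by
          rw [e]
          refine (abs_add_le _ _).trans (le_of_eq ?_)
          rw [abs_mul, abs_mul, abs_mul (125 * u ^ 2 * v), abs_mul (125 * u ^ 2), abs_mul 125,
            abs_pow]
          norm_num
      _ ≤ _ := by gcongr
  have e3 : |u| ^ 3 * (144 * |u| ^ 2) ≤ |u| ^ 3 * (306 * T) := by nlinarith
  have e4 := le_of_mul_le_mul_left e3 (by positivity)
  rw [sq_abs] at e4
  nlinarith

lemma aux_real (u v T : ℝ) (h1 : |u * (4 * u - 5 * v)| ≤ T)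
    (h2 : |v * (5 * u - 4 * v)| ≤ T) : u ^ 2 ≤ 3 * T ∧ v ^ 2 ≤ 3 * T := by
  rcases le_total |v| |u| with h | h
  · have := aux_real1 u v T h h1 h2
    refine ⟨this, le_trans ?_ this⟩
    exact sq_le_sq.2 h
  · have := aux_real1 v u T h
      (by rw [← abs_neg]; convert h2 using 2; ring) (by rw [← abs_neg]; convert h1 using 2; ring)
    exact ⟨le_trans (sq_le_sq.2 h) this, this⟩

lemma aux_sf (x y x' y' : ℤ) (hx' : 0 < x') (hx : 0 < x) (hy : 0 < y) (hy' : 0 < y')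
    (hs : Squarefree y) (hs' : Squarefree y')
    (h : x ^ 2 * y ^ 3 = x' ^ 2 * y' ^ 3) : y = y' ∧ x = x' := by
  have key : y = y' := by
    have e : (x' * y') ^ 2 * (y * y') = (x * y * y) ^ 2 := by
      linear_combination (-y) * h
    have e' : x' * y' ∣ x * y * y := (Int.pow_dvd_pow_iff (n := 2) (by norm_num)).1 ⟨_, e.symm⟩
    obtain ⟨c, hc⟩ := e'
    have hc2 : y * y' = c ^ 2 := by
      have h0 : (x' * y') ^ 2 ≠ 0 := by positivity
      apply mul_left_cancel₀ h0
      rw [e, hc]; ring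
    have hyc : y ∣ c := (hs.dvd_pow_iff_dvd (by norm_num : (2:ℕ) ≠ 0)).1 ⟨_, hc2.symm⟩
    obtain ⟨d, rfl⟩ := hyc
    have e3 : y' = y * d ^ 2 := by
      apply mul_left_cancel₀ hy.ne'
      rw [hc2]; ring
    have hd : IsUnit d := hs' d ⟨y, by rw [e3]; ring⟩
    rcases Int.isUnit_iff.1 hd with rfl | rfl <;> rw [e3] <;> ring
  subst key
  refine ⟨rfl, ?_⟩
  have h1 : x ^ 2 = x' ^ 2 := mul_right_cancel₀ (by positivity : y ^ 3 ≠ 0) h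
  exact (sq_eq_sq₀ hx.le hx'.le).1 h1

/-- all coprimality facts for a point -/
lemma aux_copr (a x y : Fin 3 → ℤ) (hx : ∀ i, 0 < x i) (hy : ∀ i, 0 < y i)
    (heq : a 0 * x 0 ^ 2 * y 0 ^ 3 + a 1 * x 1 ^ 2 * y 1 ^ 3 + a 2 * x 2 ^ 2 * y 2 ^ 3 = 0)
    (hg1 : Int.gcd (x 0 * y 0) (Int.gcd (x 1 * y 1) (x 2 * y 2)) = 1)
    (hg2 : Int.gcd (a 0 * a 1 * a 2) (x 0 * x 1 * x 2 * y 0 * y 1 * y 2) = 1) :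
    (∀ i j, IsCoprime (a i) (x j * y j)) ∧ IsCoprime (x 0 * y 0) (x 1 * y 1) ∧
     IsCoprime (x 0 * y 0) (x 2 * y 2) ∧ IsCoprime (x 1 * y 1) (x 2 * y 2) := by
  have hax : ∀ i j, IsCoprime (a i) (x j * y j) := by
    intro i j
    have h := Int.isCoprime_iff_gcd_eq_one.2 hg2
    refine (h.of_isCoprime_of_dvd_left ?_).of_isCoprime_of_dvd_right ?_
    · fin_cases i
      · exact ⟨a 1 * a 2, by simp; ring⟩
      · exact ⟨a 0 * a 2, by simp; ring⟩
      · exact ⟨a 0 * a 1, by simp; ring⟩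
    · fin_cases j
      · exact ⟨x 1 * y 1 * x 2 * y 2, by simp; ring⟩
      · exact ⟨x 0 * y 0 * x 2 * y 2, by simp; ring⟩
      · exact ⟨x 0 * y 0 * x 1 * y 1, by simp; ring⟩
  have hg : ∀ l : ℤ, Prime l → l ∣ x 0 * y 0 → l ∣ x 1 * y 1 → l ∣ x 2 * y 2 → False := by
    intro l hl h0 h1 h2
    have := Int.dvd_coe_gcd h0 (Int.dvd_coe_gcd h1 h2)
    rw [hg1] at this
    exact hl.not_isUnit (isUnit_of_dvd_one (by simpa using this))
  have hz : ∀ i, x i * y i ≠ 0 := fun i => (mul_pos (hx i) (hy i)).ne'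
  refine ⟨hax, ?_, ?_, ?_⟩
  · refine aux_pair (a 0) (a 1) (a 2) _ _ (x 2 * y 2) (y 0) (y 1) (y 2) (hz 0) ⟨x 2, by ring⟩
      (hax 2 0) hg ?_
    linear_combination heq
  · refine aux_pair (a 0) (a 2) (a 1) _ _ (x 1 * y 1) (y 0) (y 2) (y 1) (hz 0) ⟨x 1, by ring⟩
      (hax 1 0) (fun l hl h0 h1 h2 => hg l hl h0 h2 h1) ?_
    linear_combination heq
  · refine aux_pair (a 1) (a 2) (a 0) _ _ (x 0 * y 0) (y 1) (y 2) (y 0) (hz 1) ⟨x 0, by ring⟩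
      (hax 0 1) (fun l hl h0 h1 h2 => hg l hl h2 h0 h1) ?_
    linear_combination heq

lemma aux_main (a x y : Fin 3 → ℤ) (hx : ∀ i, 0 < x i) (hy : ∀ i, 0 < y i)
    (ha : ∀ i, a i ≠ 0) (hac : ∀ i j, i ≠ j → IsCoprime (a i) (a j))
    (heq : a 0 * x 0 ^ 2 * y 0 ^ 3 + a 1 * x 1 ^ 2 * y 1 ^ 3 + a 2 * x 2 ^ 2 * y 2 ^ 3 = 0)
    (hg1 : Int.gcd (x 0 * y 0) (Int.gcd (x 1 * y 1) (x 2 * y 2)) = 1)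
    (hg2 : Int.gcd (a 0 * a 1 * a 2) (x 0 * x 1 * x 2 * y 0 * y 1 * y 2) = 1)
    (hsf : ∀ i, Squarefree (a i * y i))
    (r s u v : ℤ) (hr : r ≠ 0) (hs : s ≠ 0) (hrs : IsCoprime r s)
    (hu : u = s ^ 2 * (a 0 * y 0)) (hv : v = r ^ 2 * (a 1 * y 1))
    (hn : 4 * u - 5 * v ≠ 0)
    (H : a 1 * x 0 * (r ^ 3 * (5 * u - 4 * v)) = a 0 * x 1 * (s ^ 3 * (4 * u - 5 * v)))
    (T : ℝ) (hT0 : (x 0 : ℝ) * y 0 ≤ T) (hT1 : (x 1 : ℝ) * y 1 ≤ T) :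
    (u : ℝ) ^ 2 ≤ 432 * T ∧ (v : ℝ) ^ 2 ≤ 432 * T := by
  obtain ⟨hax, h01, h02, h12⟩ := aux_copr a x y hx hy heq hg1 hg2
  have hcc : ∀ i j, i ≠ j → IsCoprime (x i * y i) (x j * y j) → IsCoprime (a i * y i) (a j * y j) := by
    intro i j hij h
    refine IsCoprime.mul_left (IsCoprime.mul_right (hac i j hij) (hax i j).of_mul_right_right)
      (IsCoprime.mul_right (hax j i).of_mul_right_right.symm h.of_mul_left_right.of_mul_right_right)
  have c01 := hcc 0 1 (by decide) h01
  have c02 := hcc 0 2 (by decide) h02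
  have c12 := hcc 1 2 (by decide) h12
  have hcx : IsCoprime (a 1 * x 0) (a 0 * x 1) :=
    IsCoprime.mul_left (IsCoprime.mul_right (hac 1 0 (by decide)) (hax 1 1).of_mul_right_left)
      (IsCoprime.mul_right (hax 0 0).of_mul_right_left.symm h01.of_mul_left_left.of_mul_right_left)
  have hd : a 1 * x 0 ∣ s ^ 3 * (4 * u - 5 * v) :=
    hcx.dvd_of_dvd_mul_left ⟨_, H.symm⟩
  obtain ⟨k, hk⟩ := hd
  have hk2 : r ^ 3 * (5 * u - 4 * v) = a 0 * x 1 * k := by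
    apply mul_left_cancel₀ (mul_ne_zero (ha 1) (hx 0).ne')
    rw [H, hk]; ring
  have hk0 : k ≠ 0 := by
    rintro rfl
    rw [mul_zero] at hk
    exact mul_ne_zero (pow_ne_zero 3 hs) hn hk
  have hZ : k * a 0 * a 1 * x 2 * y 2 ≠ 0 := by
    have := (hx 2).ne'; have := (hy 2).ne'; have := ha 0; have := ha 1
    positivity
  have hval : (u + v) * (4 * u ^ 2 - 7 * u * v + 4 * v ^ 2) ^ 2
      = -(a 2 * y 2) * (k * a 0 * a 1 * x 2 * y 2) ^ 2 := by
    have e1 : u ^ 3 * (4 * u - 5 * v) ^ 2 = (k * a 0 * a 1) ^ 2 * (a 0 * x 0 ^ 2 * y 0 ^ 3) := by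
      calc u ^ 3 * (4 * u - 5 * v) ^ 2 = (a 0 * y 0) ^ 3 * (s ^ 3 * (4 * u - 5 * v)) ^ 2 := by
            rw [show u ^ 3 = (s ^ 2 * (a 0 * y 0)) ^ 3 by rw [hu]]; ring
        _ = _ := by rw [hk]; ring
    have e2 : v ^ 3 * (5 * u - 4 * v) ^ 2 = (k * a 0 * a 1) ^ 2 * (a 1 * x 1 ^ 2 * y 1 ^ 3) := by
      calc v ^ 3 * (5 * u - 4 * v) ^ 2 = (a 1 * y 1) ^ 3 * (r ^ 3 * (5 * u - 4 * v)) ^ 2 := by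
            rw [show v ^ 3 = (r ^ 2 * (a 1 * y 1)) ^ 3 by rw [hv]]; ring
        _ = _ := by rw [hk2]; ring
    linear_combination e1 + e2 + (k * a 0 * a 1) ^ 2 * heq
  have hu0 : u ≠ 0 := by
    have := (hy 0).ne'; have := ha 0
    rw [hu]; positivity
  have huv : IsCoprime u v := by
    apply aux_cop _ _ _ hu0
    intro p hp h1 h2
    have hno : ∀ {m n : ℤ}, IsCoprime m n → p ∣ m → ¬ p ∣ n := fun h h1 h2 =>
      hp.not_isUnit (h.isUnit_of_dvd' h1 h2)
    rw [hu] at h1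
    rw [hv] at h2
    rw [hu, hv] at hval
    rcases hp.dvd_or_dvd h1 with h1 | h1 <;> rcases hp.dvd_or_dvd h2 with h2 | h2
    · exact hno hrs (hp.dvd_of_dvd_pow h2) (hp.dvd_of_dvd_pow h1)
    · have h1 := hp.dvd_of_dvd_pow h1
      exact aux_val p s r _ _ _ _ _ hp h1 h2 (hsf 1) (hno hrs.symm h1) (hno c12 h2) hZ hval
    · have h2 := hp.dvd_of_dvd_pow h2
      rw [add_comm (s ^ 2 * _)] at hval
      exact aux_val p r s _ _ _ _ _ hp h2 h1 (hsf 0) (hno hrs h2) (hno c02 h1) hZ hval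
    · exact hno c01 h1 h2
  have g1 : s * (u * (4 * u - 5 * v)) = k * a 0 * a 1 * (x 0 * y 0) := by
    calc s * (u * (4 * u - 5 * v)) = (a 0 * y 0) * (s ^ 3 * (4 * u - 5 * v)) := by
          rw [show u * (4 * u - 5 * v) = (s ^ 2 * (a 0 * y 0)) * (4 * u - 5 * v) by rw [← hu]]; ring
      _ = _ := by rw [hk]; ring
  have g2 : r * (v * (5 * u - 4 * v)) = k * a 0 * a 1 * (x 1 * y 1) := by
    calc r * (v * (5 * u - 4 * v)) = (a 1 * y 1) * (r ^ 3 * (5 * u - 4 * v)) := by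
          rw [show v * (5 * u - 4 * v) = (r ^ 2 * (a 1 * y 1)) * (5 * u - 4 * v) by rw [← hv]]; ring
      _ = _ := by rw [hk2]; ring
  have d1 : k * a 0 * a 1 ∣ u ^ 2 * (4 * u - 5 * v) := by
    refine ⟨x 0 * y 0 * (s * (a 0 * y 0)), ?_⟩
    rw [← mul_assoc, ← g1]
    have : u ^ 2 * (4 * u - 5 * v) = u * (u * (4 * u - 5 * v)) := by ring
    rw [this]; nth_rewrite 1 [hu]; ring
  have d2 : k * a 0 * a 1 ∣ v ^ 2 * (5 * u - 4 * v) := by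
    refine ⟨x 1 * y 1 * (r * (a 1 * y 1)), ?_⟩
    rw [← mul_assoc, ← g2]
    have : v ^ 2 * (5 * u - 4 * v) = v * (v * (5 * u - 4 * v)) := by ring
    rw [this]; nth_rewrite 1 [hv]; ring
  have d3 : k * a 0 * a 1 ∣ 144 * u ^ 5 := by
    have : 144 * u ^ 5 = u ^ 2 * (4 * u - 5 * v) * (36 * u ^ 2 + 45 * (u * v) - 100 * v ^ 2)
      + v ^ 2 * (5 * u - 4 * v) * (125 * u ^ 2) := by ring
    rw [this]
    exact dvd_add (d1.mul_right _) (d2.mul_right _)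
  have d4 : k * a 0 * a 1 ∣ 144 * v ^ 5 := by
    have : 144 * v ^ 5 = v ^ 2 * (5 * u - 4 * v) * (-(36 * v ^ 2 + 45 * (u * v) - 100 * u ^ 2))
      + u ^ 2 * (4 * u - 5 * v) * (-(125 * v ^ 2)) := by ring
    rw [this]
    exact dvd_add (d2.mul_right _) (d1.mul_right _)
  have d5 : k * a 0 * a 1 ∣ 144 := by
    obtain ⟨m, n, hmn⟩ := (huv.pow (m := 5) (n := 5))
    have : (144 : ℤ) = 144 * u ^ 5 * m + 144 * v ^ 5 * n := by linear_combination (-144) * hmn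
    rw [this]
    exact dvd_add (d3.mul_right _) (d4.mul_right _)
  have d6 : |k * a 0 * a 1| ≤ 144 := Int.le_of_dvd (by norm_num) ((abs_dvd _ _).2 d5)
  have bnd : ∀ (s w z : ℤ), s ≠ 0 → 0 < z → s * w = k * a 0 * a 1 * z → |w| ≤ 144 * z := by
    intro s w z hs hz h
    have h1 : |s| * |w| = |k * a 0 * a 1| * z := by rw [← abs_mul, h, abs_mul, abs_of_pos hz]
    have h2 : 1 ≤ |s| := Int.one_le_abs hs
    nlinarith [abs_nonneg w]
  have b1 := bnd _ _ _ hs (mul_pos (hx 0) (hy 0)) g1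
  have b2 := bnd _ _ _ hr (mul_pos (hx 1) (hy 1)) g2
  have b1' : |(u : ℝ) * (4 * u - 5 * v)| ≤ 144 * T := by
    have : |(u : ℝ) * (4 * u - 5 * v)| ≤ 144 * ((x 0 : ℝ) * y 0) := by exact_mod_cast b1
    linarith
  have b2' : |(v : ℝ) * (5 * u - 4 * v)| ≤ 144 * T := by
    have : |(v : ℝ) * (5 * u - 4 * v)| ≤ 144 * ((x 1 : ℝ) * y 1) := by exact_mod_cast b2
    linarith
  obtain ⟨q1, q2⟩ := aux_real u v (144 * T) b1' b2'
  exact ⟨by linarith, by linarith⟩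


lemma aux_inj (a : Fin 3 → ℤ) (X Y : Fin 3 → ℝ) (ha : ∀ i, a i ≠ 0)
    (x y x' y' : Fin 3 → ℤ) (hp : (x, y) ∈ S0 a X Y) (hp' : (x', y') ∈ S0 a X Y)
    (h0 : y 0 = y' 0) (h1 : y 1 = y' 1) (P Q : ℤ) (hP : P ≠ 0) (hQ : Q ≠ 0)
    (H : a 1 * x 0 * P = a 0 * x 1 * Q) (H' : a 1 * x' 0 * P = a 0 * x' 1 * Q) :
    x = x' ∧ y = y' := by
  obtain ⟨hx, hy, -, -, heq, hg1, hg2, hsf⟩ := hp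
  obtain ⟨hx', hy', -, -, heq', hg1', hg2', hsf'⟩ := hp'
  dsimp only at *
  have c := (aux_copr a x y hx hy heq hg1 hg2).2.1.of_mul_left_left.of_mul_right_left
  have c' := (aux_copr a x' y' hx' hy' heq' hg1' hg2').2.1.of_mul_left_left.of_mul_right_left
  have e : x 0 * x' 1 = x 1 * x' 0 := by
    have hne : a 0 * a 1 * P * Q ≠ 0 :=
      mul_ne_zero (mul_ne_zero (mul_ne_zero (ha 0) (ha 1)) hP) hQ
    apply mul_left_cancel₀ hne
    linear_combination (a 0 * x' 1 * Q) * H - (a 0 * x 1 * Q) * H'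
  have d1 : x 0 ∣ x' 0 := c.dvd_of_dvd_mul_left ⟨_, e.symm⟩
  have d2 : x' 0 ∣ x 0 := c'.dvd_of_dvd_mul_right ⟨x 1, by rw [e]; ring⟩
  have e0 : x 0 = x' 0 := Int.dvd_antisymm (hx 0).le (hx' 0).le d1 d2
  have e1 : x 1 = x' 1 := by
    apply mul_left_cancel₀ (hx 0).ne'
    nth_rewrite 1 [e0]
    linear_combination -e
  have e2 : x 2 ^ 2 * y 2 ^ 3 = x' 2 ^ 2 * y' 2 ^ 3 := by
    apply mul_left_cancel₀ (ha 2)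
    rw [← h0, ← h1, ← e0, ← e1] at heq'
    linear_combination heq - heq'
  obtain ⟨f1, f2⟩ := aux_sf _ _ _ _ (hx' 2) (hx 2) (hy 2) (hy' 2)
    ((hsf 2).squarefree_of_dvd (dvd_mul_left _ _)) ((hsf' 2).squarefree_of_dvd (dvd_mul_left _ _)) e2
  constructor
  · funext i; fin_cases i
    · exact e0
    · exact e1
    · exact f2
  · funext i; fin_cases i
    · exact h0
    · exact h1
    · exact f1

lemma aux_rat (α β A D : ℤ) (hα : α ≠ 0) (hβ : β ≠ 0) (g ν : ℚ) (hg : g ≠ 0)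
    (h1 : (α : ℚ) = ν * (4 * (A : ℚ) - 5 * g ^ 2 * (D : ℚ)))
    (h2 : (β : ℚ) = ν * g ^ 3 * (5 * (A : ℚ) - 4 * g ^ 2 * (D : ℚ))) :
    ∃ r s : ℤ, r ≠ 0 ∧ 0 < s ∧ IsCoprime r s ∧
      4 * (s ^ 2 * A) - 5 * (r ^ 2 * D) ≠ 0 ∧ 5 * (s ^ 2 * A) - 4 * (r ^ 2 * D) ≠ 0 ∧
      α * (r ^ 3 * (5 * (s ^ 2 * A) - 4 * (r ^ 2 * D))) =
        β * (s ^ 3 * (4 * (s ^ 2 * A) - 5 * (r ^ 2 * D))) := by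
  have hs : (g.den : ℚ) ≠ 0 := by exact_mod_cast g.den_nz
  have hgs : g * g.den = g.num := Rat.mul_den_eq_num g
  have k1 : (α : ℚ) * (g.den : ℚ) ^ 2 =
      ν * (4 * ((g.den : ℚ) ^ 2 * A) - 5 * ((g.num : ℚ) ^ 2 * D)) := by
    rw [← hgs, h1]; ring
  have k2 : (β : ℚ) * (g.den : ℚ) ^ 5 =
      ν * (g.num : ℚ) ^ 3 * (5 * ((g.den : ℚ) ^ 2 * A) - 4 * ((g.num : ℚ) ^ 2 * D)) := by
    rw [← hgs, h2]; ring
  have hα' : (α : ℚ) ≠ 0 := by exact_mod_cast hα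
  have hβ' : (β : ℚ) ≠ 0 := by exact_mod_cast hβ
  have hν : ν ≠ 0 := by rintro rfl; apply hα'; rw [h1]; ring
  refine ⟨g.num, g.den, Rat.num_ne_zero.2 hg, by exact_mod_cast g.den_pos, ?_, ?_, ?_, ?_⟩
  · rw [Int.isCoprime_iff_gcd_eq_one]
    exact g.reduced
  · intro h
    have h' : 4 * ((g.den : ℚ) ^ 2 * A) - 5 * ((g.num : ℚ) ^ 2 * D) = 0 := by exact_mod_cast h
    rw [h', mul_zero] at k1
    exact mul_ne_zero hα' (pow_ne_zero 2 hs) k1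
  · intro h
    have h' : 5 * ((g.den : ℚ) ^ 2 * A) - 4 * ((g.num : ℚ) ^ 2 * D) = 0 := by exact_mod_cast h
    rw [h', mul_zero] at k2
    exact mul_ne_zero hβ' (pow_ne_zero 5 hs) k2
  · have : (α : ℚ) * ((g.num : ℚ) ^ 3 * (5 * ((g.den : ℚ) ^ 2 * A) - 4 * ((g.num : ℚ) ^ 2 * D))) =
        β * ((g.den : ℚ) ^ 3 * (4 * ((g.den : ℚ) ^ 2 * A) - 5 * ((g.num : ℚ) ^ 2 * D))) := by
      apply mul_left_cancel₀ (mul_ne_zero hν (pow_ne_zero 2 hs))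
      linear_combination ((g.num : ℚ) ^ 3 * (5 * ((g.den : ℚ) ^ 2 * A)
        - 4 * ((g.num : ℚ) ^ 2 * D)) * ν) * k1 - (ν * (4 * ((g.den : ℚ) ^ 2 * A)
        - 5 * ((g.num : ℚ) ^ 2 * D))) * k2
    exact_mod_cast this

/-- the size bound for a denominator / numerator -/
lemma aux_size (B Y : ℝ) (hB : 2 ≤ B) (hY : B ^ ((1 : ℝ) / 5 - 1 / 90) ≤ Y) (s a y : ℤ)
    (ha : a ≠ 0) (hy : Y / 2 < y)
    (h : (((s ^ 2 * (a * y) : ℤ)) : ℝ) ^ 2 ≤ 432 * B ^ ((77 : ℝ) / 180)) :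
    |(s : ℝ)| ≤ 7 * B ^ ((1 : ℝ) / 80) := by
  have hB0 : 0 < B := by linarith
  set c := B ^ ((1 : ℝ) / 5 - 1 / 90) with hc
  have hc0 : 0 < c := Real.rpow_pos_of_pos hB0 _
  have e1 : B ^ ((77 : ℝ) / 180) = c ^ 2 * (B ^ ((1 : ℝ) / 80)) ^ 4 := by
    rw [hc, ← Real.rpow_mul_natCast hB0.le, ← Real.rpow_mul_natCast hB0.le, ← Real.rpow_add hB0]
    norm_num
  have ha1 : 1 ≤ (a : ℝ) ^ 2 := by
    have : 1 ≤ a ^ 2 := by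
      have h0 : 0 < a ^ 2 := by positivity
      omega
    exact_mod_cast this
  have hy2 : c ^ 2 / 4 ≤ (y : ℝ) ^ 2 := by nlinarith
  have e2 : (s : ℝ) ^ 4 * (c ^ 2 / 4) ≤ 432 * (c ^ 2 * (B ^ ((1 : ℝ) / 80)) ^ 4) := by
    rw [← e1]
    refine le_trans ?_ h
    push_cast
    calc (s : ℝ) ^ 4 * (c ^ 2 / 4) ≤ (s : ℝ) ^ 4 * (y : ℝ) ^ 2 := by gcongr
      _ = 1 * ((s : ℝ) ^ 4 * (y : ℝ) ^ 2) := by ring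
      _ ≤ (a : ℝ) ^ 2 * ((s : ℝ) ^ 4 * (y : ℝ) ^ 2) := by gcongr
      _ = _ := by ring
  have hb : 0 < B ^ ((1 : ℝ) / 80) := Real.rpow_pos_of_pos hB0 _
  have e3 : |(s : ℝ)| ^ 4 ≤ (7 * B ^ ((1 : ℝ) / 80)) ^ 4 := by
    rw [show |(s : ℝ)| ^ 4 = (s : ℝ) ^ 4 by rw [← abs_pow]; exact abs_of_nonneg (by positivity)]
    have : c ^ 2 * (s : ℝ) ^ 4 ≤ c ^ 2 * (1728 * (B ^ ((1 : ℝ) / 80)) ^ 4) := by linarith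
    have := le_of_mul_le_mul_left this (by positivity)
    rw [mul_pow]
    have : 0 ≤ (B ^ ((1 : ℝ) / 80)) ^ 4 := by positivity
    linarith
  exact le_of_pow_le_pow_left₀ (by norm_num) (by positivity) e3

/-- There is an absolute constant `C` such that the set `S₁(B)` of points
`(x₁, x₂, x₃, y₁, y₂, y₃) ∈ S₀(B)` for which there exist nonzero rationals `g, ν` with
`a₂x₁ = ν(4a₁y₁ − 5g²a₂y₂)` and `a₁x₂ = νg³(5a₁y₁ − 4g²a₂y₂)` satisfies `#S₁(B) ≤ CB^{1/2}`. -/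
theorem exceptional_points_bound :
    ∃ C : ℝ, 0 < C ∧ ∀ (a : Fin 3 → ℤ) (X Y : Fin 3 → ℝ) (B : ℝ),
      2 ≤ B → (∀ i, a i ≠ 0) → (∀ i, Squarefree (a i)) →
      (∀ i j, i ≠ j → IsCoprime (a i) (a j)) →
      (∀ i, 1 ≤ X i) → (∀ i, 1 ≤ Y i) →
      (∀ i, X i ^ 2 * Y i ^ 3 ≤ 32 * B / |(a i : ℝ)|) →
      (∀ i, B ^ ((1 : ℝ) / 5 - 1 / 60) ≤ X i ∧ X i ≤ B ^ ((1 : ℝ) / 5 + 1 / 60)) →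
      (∀ i, B ^ ((1 : ℝ) / 5 - 1 / 90) ≤ Y i ∧ Y i ≤ B ^ ((1 : ℝ) / 5 + 1 / 90)) →
        (({p ∈ S0 a X Y | ∃ g ν : ℚ, g ≠ 0 ∧ ν ≠ 0 ∧
            ((a 1 * p.1 0 : ℤ) : ℚ) =
              ν * (4 * ((a 0 * p.2 0 : ℤ) : ℚ) - 5 * g ^ 2 * ((a 1 * p.2 1 : ℤ) : ℚ)) ∧
            ((a 0 * p.1 1 : ℤ) : ℚ) =
              ν * g ^ 3 *
                (5 * ((a 0 * p.2 0 : ℤ) : ℚ) - 4 * g ^ 2 * ((a 1 * p.2 1 : ℤ) : ℚ))}).ncard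
            : ℝ) ≤ C * B ^ ((1 : ℝ) / 2) := by
  refine ⟨105, by norm_num, ?_⟩
  intro a X Y B hB ha _ hac hX1 hY1 _ hX hY
  have hB0 : 0 < B := by linarith
  set S : Set ((Fin 3 → ℤ) × (Fin 3 → ℤ)) := {p ∈ S0 a X Y | ∃ g ν : ℚ, g ≠ 0 ∧ ν ≠ 0 ∧
            ((a 1 * p.1 0 : ℤ) : ℚ) =
              ν * (4 * ((a 0 * p.2 0 : ℤ) : ℚ) - 5 * g ^ 2 * ((a 1 * p.2 1 : ℤ) : ℚ)) ∧
            ((a 0 * p.1 1 : ℤ) : ℚ) =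
              ν * g ^ 3 *
                (5 * ((a 0 * p.2 0 : ℤ) : ℚ) - 4 * g ^ 2 * ((a 1 * p.2 1 : ℤ) : ℚ))} with hS
  have hex : ∀ p : (Fin 3 → ℤ) × (Fin 3 → ℤ), ∃ q : ℤ × ℤ, p ∈ S →
      q.1 ≠ 0 ∧ 0 < q.2 ∧ IsCoprime q.1 q.2 ∧
      4 * (q.2 ^ 2 * (a 0 * p.2 0)) - 5 * (q.1 ^ 2 * (a 1 * p.2 1)) ≠ 0 ∧
      5 * (q.2 ^ 2 * (a 0 * p.2 0)) - 4 * (q.1 ^ 2 * (a 1 * p.2 1)) ≠ 0 ∧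
      a 1 * p.1 0 * (q.1 ^ 3 * (5 * (q.2 ^ 2 * (a 0 * p.2 0)) - 4 * (q.1 ^ 2 * (a 1 * p.2 1)))) =
        a 0 * p.1 1 * (q.2 ^ 3 * (4 * (q.2 ^ 2 * (a 0 * p.2 0))
          - 5 * (q.1 ^ 2 * (a 1 * p.2 1)))) := by
    intro p
    by_cases hp : p ∈ S
    · obtain ⟨hp0, g, ν, hg, hν, h1, h2⟩ := hp
      obtain ⟨r, s, h⟩ := aux_rat _ _ _ _ (mul_ne_zero (ha 1) (hp0.1 0).ne')
        (mul_ne_zero (ha 0) (hp0.1 1).ne') g ν hg h1 h2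
      exact ⟨(r, s), fun _ => h⟩
    · exact ⟨(0, 0), fun h => absurd h hp⟩
  choose q hq using hex
  set b := B ^ ((1 : ℝ) / 80) with hb
  have hb1 : 1 ≤ b := Real.one_le_rpow (by linarith) (by norm_num)
  have hsize : ∀ p ∈ S, |((q p).1 : ℝ)| ≤ 7 * b ∧ |((q p).2 : ℝ)| ≤ 7 * b := by
    intro p hp
    obtain ⟨h1, h2, h3, h4, h5, h6⟩ := hq p hp
    obtain ⟨hx, hy, hxX, hyY, heq, hg1, hg2, hsf⟩ := hp.1
    have hT : ∀ i, (p.1 i : ℝ) * p.2 i ≤ B ^ ((77 : ℝ) / 180) := by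
      intro i
      have hxi : (0 : ℝ) < p.1 i := by exact_mod_cast hx i
      have hyi : (0 : ℝ) < p.2 i := by exact_mod_cast hy i
      calc (p.1 i : ℝ) * p.2 i ≤ B ^ ((1 : ℝ) / 5 + 1 / 60) * B ^ ((1 : ℝ) / 5 + 1 / 90) := by
            gcongr
            · exact (hxX i).2.trans (hX i).2
            · exact (hyY i).2.trans (hY i).2
        _ = _ := by rw [← Real.rpow_add hB0]; norm_num
    obtain ⟨m1, m2⟩ := aux_main a p.1 p.2 hx hy ha hac heq hg1 hg2 hsf (q p).1 (q p).2 _ _ h1 h2.ne'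
      h3 rfl rfl h4 h6 _ (hT 0) (hT 1)
    exact ⟨aux_size B (Y 1) hB (hY 1).1 _ _ _ (ha 1) (hyY 1).1 m2,
      aux_size B (Y 0) hB (hY 0).1 _ _ _ (ha 0) (hyY 0).1 m1⟩
  set N : ℕ := ⌊7 * b⌋₊ with hN
  have hNle : (N : ℝ) ≤ 7 * b := Nat.floor_le (by positivity)
  let F : Finset ((ℤ × ℤ) × (ℤ × ℤ)) :=
    (Finset.Icc (-(N : ℤ)) N ×ˢ Finset.Icc 1 (N : ℤ)) ×ˢ
      (Finset.Icc 1 (⌊Y 0⌋₊ : ℤ) ×ˢ Finset.Icc 1 (⌊Y 1⌋₊ : ℤ))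
  have hfl : ∀ (n : ℤ) (z : ℝ), |(n : ℝ)| ≤ z → |n| ≤ (⌊z⌋₊ : ℤ) := by
    intro n z h
    have h' : ((n.natAbs : ℕ) : ℝ) ≤ z := by
      rw [Nat.cast_natAbs]; push_cast; exact h
    have := Nat.le_floor h'
    rw [Int.abs_eq_natAbs]
    exact_mod_cast this
  have hcard : S.ncard ≤ F.card := by
    rw [← Set.ncard_coe_finset]
    apply Set.ncard_le_ncard_of_injOn (fun p => (q p, (p.2 0, p.2 1)))
    · intro p hp
      obtain ⟨s1, s2⟩ := hsize p hp
      have t1 := hfl _ _ s1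
      have t2 := hfl _ _ s2
      have hq2 := (hq p hp).2.1
      have hy := hp.1.2.1
      have hyY := hp.1.2.2.2.1
      have hy' : ∀ i, p.2 i ≤ (⌊Y i⌋₊ : ℤ) := by
        intro i
        refine (le_abs_self _).trans (hfl _ _ ?_)
        rw [abs_of_pos (by exact_mod_cast hy i)]
        exact (hyY i).2
      have y0 := hy 0
      have y1 := hy 1
      simp only [F, Finset.coe_product, Set.mem_prod, Finset.coe_Icc, Set.mem_Icc]
      exact ⟨⟨abs_le.1 t1, by omega, (abs_le.1 t2).2⟩, ⟨by omega, hy' 0⟩, ⟨by omega, hy' 1⟩⟩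
    · intro p hp p' hp' h
      simp only [Prod.mk.injEq] at h
      obtain ⟨hqq, h0, h1⟩ := h
      obtain ⟨k1, k2, k3, k4, k5, k6⟩ := hq p hp
      obtain ⟨-, -, -, -, -, k6'⟩ := hq p' hp'
      rw [← hqq, ← h0, ← h1] at k6'
      obtain ⟨r1, r2⟩ := aux_inj a X Y ha p.1 p.2 p'.1 p'.2 hp.1 hp'.1 h0 h1 _ _
        (mul_ne_zero (pow_ne_zero 3 k1) k5) (mul_ne_zero (pow_ne_zero 3 k2.ne') k4) k6 k6'
      exact Prod.ext r1 r2
  have hFc : F.card = (2 * N + 1) * N * (⌊Y 0⌋₊ * ⌊Y 1⌋₊) := by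
    simp only [F, Finset.card_product, Int.card_Icc]
    have e1 : ((N : ℤ) + 1 - -(N : ℤ)).toNat = 2 * N + 1 := by omega
    have e2 : ∀ M : ℕ, ((M : ℤ) + 1 - 1).toNat = M := by intro M; omega
    rw [e1, e2, e2, e2]
  have hY' : ∀ i, (⌊Y i⌋₊ : ℝ) ≤ B ^ ((1 : ℝ) / 5 + 1 / 90) := fun i =>
    (Nat.floor_le (by linarith [hY1 i])).trans (hY i).2
  calc (S.ncard : ℝ) ≤ (F.card : ℝ) := by exact_mod_cast hcard
    _ = (2 * N + 1) * N * ((⌊Y 0⌋₊ : ℝ) * ⌊Y 1⌋₊) := by rw [hFc]; push_cast; ring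
    _ ≤ (15 * b) * (7 * b) * (B ^ ((1 : ℝ) / 5 + 1 / 90) * B ^ ((1 : ℝ) / 5 + 1 / 90)) := by
        have : (2 * N + 1 : ℝ) ≤ 15 * b := by linarith
        gcongr
        · exact hY' 0
        · exact hY' 1
    _ = 105 * B ^ ((161 : ℝ) / 360) := by
        have : B ^ ((161 : ℝ) / 360) = b * b * (B ^ ((1 : ℝ) / 5 + 1 / 90) * B ^ ((1 : ℝ) / 5 + 1 / 90)) := by
          rw [hb, ← Real.rpow_add hB0, ← Real.rpow_add hB0, ← Real.rpow_add hB0]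
          norm_num
        rw [this]; ring
    _ ≤ 105 * B ^ ((1 : ℝ) / 2) := by
        refine mul_le_mul_of_nonneg_left ?_ (by norm_num)
        exact Real.rpow_le_rpow_of_exponent_le (by linarith) (by norm_num)
end
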